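/- Assume 0 ≤ α < N, p, q > 0, ρ > 0, that the Dirichlet eigenpair hypothesis holds for (Ω, λ₁, φ), and μ ≤ C_{H,Ω}. If s > 1, p + q ≥ 2, and either p·|γ_*| ≤ N − α or (p + q)·|γ_*| < (|γ_*| + 2)/s + N − α + 2 (the latter equivalent to p + q < (1/s)(1 + 2/|γ_*|) + (N−α+2)/|γ_*| when γ_* < 0), then the system (S): −Δu − μ|x|^{−2}u ≥ (|x|^{−α} * v^p) v^q, −Δv − μ|x|^{−2}v ≥ u^s has no positive solution in C_Ω^ρ. -/

import Mathlib

open MeasureTheory Real Set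
open scoped ENNReal NNReal

noncomputable section

/-- Euclidean space `ℝ^N`. -/
abbrev Euc (N : ℕ) := EuclideanSpace ℝ (Fin N)

/-- The Euclidean Laplacian `Δu(x) = ∑ ∂²u/∂xᵢ²(x)`, the trace of the Hessian. -/
def lap (N : ℕ) (u : Euc N → ℝ) (x : Euc N) : ℝ :=
  ∑ i : Fin N,
    iteratedFDeriv ℝ 2 u x ![EuclideanSpace.single i 1, EuclideanSpace.single i 1]

/-- The open cone `C_Ω^ρ = {x : |x| > ρ, x/|x| ∈ Ω}`. -/
def coneGT (N : ℕ) (ρ : ℝ) (Ω : Set (Euc N)) : Set (Euc N) :=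
  {x | ρ < ‖x‖ ∧ ‖x‖⁻¹ • x ∈ Ω}

/-- The full open cone `C_Ω = {x ≠ 0 : x/|x| ∈ Ω}`. -/
def cone (N : ℕ) (Ω : Set (Euc N)) : Set (Euc N) :=
  {x | x ≠ 0 ∧ ‖x‖⁻¹ • x ∈ Ω}

/-- `Ω` is a nonempty, connected, relatively open subset of the unit sphere `S^{N-1}`. -/
def IsConeDomain (N : ℕ) (Ω : Set (Euc N)) : Prop :=
  Ω ⊆ Metric.sphere (0 : Euc N) 1 ∧ IsConnected Ω ∧
    IsOpen {ω : Metric.sphere (0 : Euc N) 1 | (ω : Euc N) ∈ Ω}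

/-- The convolution `(|x|^{-α} * f)(x) = ∫_{C_Ω^ρ} f(y)|x-y|^{-α} dy`, valued in `[0,∞]`. -/
def rieszConv (N : ℕ) (α ρ : ℝ) (Ω : Set (Euc N)) (f : Euc N → ℝ) (x : Euc N) : ℝ≥0∞ :=
  ∫⁻ y in coneGT N ρ Ω, ENNReal.ofReal (f y * ‖x - y‖ ^ (-α))

/-- Dirichlet eigenpair hypothesis for `(Ω, λ₁, φ)`: `φ` is continuous on the closure of `Ω`,
positive on `Ω`, vanishing on the relative boundary, with maximum `1`, and its 0-homogeneous
extension `Φ(x) = φ(x/|x|)` is `C²` on the open cone and satisfies `ΔΦ = -λ₁|x|⁻²Φ`. -/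
structure DirichletEigenpair (N : ℕ) (Ω : Set (Euc N)) (lam1 : ℝ) (φ : Euc N → ℝ) : Prop where
  contOn : ContinuousOn φ (closure Ω)
  pos : ∀ ω ∈ Ω, 0 < φ ω
  bdryZero : ∀ ω ∈ closure Ω \ Ω, φ ω = 0
  le_one : ∀ ω ∈ closure Ω, φ ω ≤ 1
  max_one : ∃ ω ∈ closure Ω, φ ω = 1
  smoothExt : ContDiffOn ℝ 2 (fun x => φ (‖x‖⁻¹ • x)) (cone N Ω)
  eigen : ∀ x ∈ cone N Ω,
    lap N (fun y => φ (‖y‖⁻¹ • y)) x = -lam1 * ‖x‖ ^ (-(2:ℝ)) * φ (‖x‖⁻¹ • x)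

/-- The Hardy constant `C_{H,Ω} = λ₁ + ((N-2)/2)²`. -/
def CHconst (N : ℕ) (lam1 : ℝ) : ℝ := lam1 + (((N : ℝ) - 2) / 2) ^ 2

/-- The smaller root `γ_*` of `γ(γ + N - 2) = λ₁ - μ`. -/
def gammaStar (N : ℕ) (lam1 μ : ℝ) : ℝ :=
  (-((N : ℝ) - 2) - Real.sqrt (((N : ℝ) - 2) ^ 2 + 4 * (lam1 - μ))) / 2

/-- A positive (classical) solution of `(E) : -Δu - μ|x|⁻²u ≥ (|x|^{-α} * uᵖ) u^q` in `C_Ω^ρ`. -/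
def IsPosSolE (N : ℕ) (ρ μ α p q : ℝ) (Ω : Set (Euc N)) (u : Euc N → ℝ) : Prop :=
  ContDiffOn ℝ 2 u (coneGT N ρ Ω) ∧
  ContinuousOn u (closure (coneGT N ρ Ω)) ∧
  (∀ x ∈ coneGT N ρ Ω, 0 < u x) ∧
  (∀ x ∈ coneGT N ρ Ω, rieszConv N α ρ Ω (fun y => u y ^ p) x < ⊤) ∧
  (∀ x ∈ coneGT N ρ Ω,
    (rieszConv N α ρ Ω (fun y => u y ^ p) x).toReal * u x ^ q ≤
      -lap N u x - μ * ‖x‖ ^ (-(2:ℝ)) * u x)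

/-- A positive solution of `(Z) : -Δu - μ|x|⁻²u ≥ (∫_{C_Ω^ρ} uᵖ) u^q` in `C_Ω^ρ`. -/
def IsPosSolZ (N : ℕ) (ρ μ p q : ℝ) (Ω : Set (Euc N)) (u : Euc N → ℝ) : Prop :=
  ContDiffOn ℝ 2 u (coneGT N ρ Ω) ∧
  ContinuousOn u (closure (coneGT N ρ Ω)) ∧
  (∀ x ∈ coneGT N ρ Ω, 0 < u x) ∧
  (∫⁻ y in coneGT N ρ Ω, ENNReal.ofReal (u y ^ p)) < ⊤ ∧
  (∀ x ∈ coneGT N ρ Ω,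
    (∫⁻ y in coneGT N ρ Ω, ENNReal.ofReal (u y ^ p)).toReal * u x ^ q ≤
      -lap N u x - μ * ‖x‖ ^ (-(2:ℝ)) * u x)

/-- A positive solution `(u, v)` of the system `(S)` in `C_Ω^ρ`. -/
def IsPosSolS (N : ℕ) (ρ μ α p q s : ℝ) (Ω : Set (Euc N)) (u v : Euc N → ℝ) : Prop :=
  ContDiffOn ℝ 2 u (coneGT N ρ Ω) ∧ ContinuousOn u (closure (coneGT N ρ Ω)) ∧
  ContDiffOn ℝ 2 v (coneGT N ρ Ω) ∧ ContinuousOn v (closure (coneGT N ρ Ω)) ∧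
  (∀ x ∈ coneGT N ρ Ω, 0 < u x) ∧ (∀ x ∈ coneGT N ρ Ω, 0 < v x) ∧
  (∀ x ∈ coneGT N ρ Ω, rieszConv N α ρ Ω (fun y => v y ^ p) x < ⊤) ∧
  (∀ x ∈ coneGT N ρ Ω,
    (rieszConv N α ρ Ω (fun y => v y ^ p) x).toReal * v x ^ q ≤
      -lap N u x - μ * ‖x‖ ^ (-(2:ℝ)) * u x) ∧
  (∀ x ∈ coneGT N ρ Ω, u x ^ s ≤ -lap N v x - μ * ‖x‖ ^ (-(2:ℝ)) * v x)

/-!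
Solutions are averaged against `Φ(x) dx`, `Φ(x) = φ(x/|x|)`, over the logarithmic annuli
`{T ≤ log |x| < T + 1}`. Testing the supersolution inequality for `-Δ - μ|x|⁻²` with
`f(log |x|) Φ(x)` reduces it to one dimension: with `γ = γ_*`, every positive supersolution `w`
satisfies `∫ w ≥ c e^{(N + γ)T}` and `∫ (-Δw - μ|x|⁻²w) ≤ C e^{-2T} ∫ w` for large `T`. Since
`Φ` need not have an integrable gradient up to the boundary of the cone, it is first replaced by a
smooth convex truncation vanishing near that boundary, whose error term has a favourable sign.

On an annulus the kernel `|x - y|^{-α}` is at least a multiple of `e^{-αT}`. If `p|γ| ≤ N - α`, the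
lower bound on `∫ v ^ p` makes each annulus contribute a fixed amount to `|x|^{-α} * v ^ p`, which
is therefore infinite. Otherwise Hölder's and Jensen's inequalities chain the averaged inequalities
into a cycle from `∫ v` back to itself, forcing `e^{δT}` to stay bounded as `T → ∞`, where `δ > 0`
is the gap in the second condition on the exponents.
-/

section Development

open Filter Topology InnerProductSpace Gradient Laplacian

section Laplacian

lemma log_norm_eq_half_log_norm_sq {E : Type*} [NormedAddCommGroup E] :
    (fun y : E => log ‖y‖) = fun y => (fun t => (1 / 2) * log t) (‖y‖ ^ 2) := by
  funext y
  simp only [log_pow]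
  push_cast
  ring

lemma deriv_half_log : deriv (fun t : ℝ => (1 / 2) * log t) = fun t => (1 / 2) * t⁻¹ := by
  funext t
  simp

lemma norm_convexCombination_sq_le {E : Type*} [SeminormedAddCommGroup E] [NormedSpace ℝ E]
    {a b : ℝ} (ha : 0 ≤ a) (hb : 0 ≤ b) (hab : a + b = 1) (X Y : E) :
    ‖a • X + b • Y‖ ^ 2 ≤ a * ‖X‖ ^ 2 + b * ‖Y‖ ^ 2 :=
  (convexOn_univ_norm.pow (fun _ _ => norm_nonneg _) 2).2 (mem_univ X) (mem_univ Y) ha hb hab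

lemma rpow_mul_rpow_eq_exp {c d : ℝ} (hc : 0 < c) (hd : 0 < d) (a b : ℝ) :
    c ^ a * d ^ b = exp (a * log c + b * log d) := by
  rw [rpow_def_of_pos hc, rpow_def_of_pos hd, ← exp_add, mul_comm a, mul_comm b]

variable {E : Type*} [NormedAddCommGroup E] [InnerProductSpace ℝ E] {u v g : E → ℝ} {x : E}

lemma differentiableAt_fderiv_apply (hu : ContDiffAt ℝ 2 u x) (e : E) :
    DifferentiableAt ℝ (fun y => fderiv ℝ u y e) x :=
  ((hu.fderiv_right (m := 1) (by norm_num)).differentiableAt one_ne_zero).clm_apply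
    (differentiableAt_const e)

lemma continuousAt_fderiv_fderiv_apply (hu : ContDiffAt ℝ 2 u x) (e : E) :
    ContinuousAt (fun z => fderiv ℝ (fun y => fderiv ℝ u y e) z e) x := by
  have h : ContDiffAt ℝ 1 (fun y => fderiv ℝ u y e) x :=
    (hu.fderiv_right (by norm_num)).clm_apply contDiffAt_const
  exact ((h.fderiv_right (m := 0) (by norm_num)).clm_apply contDiffAt_const).continuousAt

lemma contDiffAt_log_norm {n : WithTop ℕ∞} (hx : x ≠ 0) :
    ContDiffAt ℝ n (fun y : E => log ‖y‖) x :=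
  (contDiffAt_norm ℝ hx).log (norm_ne_zero_iff.2 hx)

section Gradient

variable [CompleteSpace E]

lemma gradient_comp {F : ℝ → ℝ} (hF : DifferentiableAt ℝ F (g x)) (hg : DifferentiableAt ℝ g x) :
    ∇ (fun y => F (g y)) x = deriv F (g x) • ∇ g x := by
  refine HasGradientAt.gradient (hasGradientAt_iff_hasFDerivAt.2 ?_)
  rw [map_smul, toDual_gradient]
  exact hF.hasDerivAt.comp_hasFDerivAt x hg.hasFDerivAt

lemma gradient_add (hu : DifferentiableAt ℝ u x) (hv : DifferentiableAt ℝ v x) :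
    ∇ (fun y => u y + v y) x = ∇ u x + ∇ v x := by
  refine HasGradientAt.gradient (hasGradientAt_iff_hasFDerivAt.2 ?_)
  rw [map_add, toDual_gradient, toDual_gradient]
  exact hu.hasFDerivAt.add hv.hasFDerivAt

lemma gradient_const_mul (c : ℝ) (hu : DifferentiableAt ℝ u x) :
    ∇ (fun y => c * u y) x = c • ∇ u x := by
  refine HasGradientAt.gradient (hasGradientAt_iff_hasFDerivAt.2 ?_)
  rw [map_smul, toDual_gradient]
  exact hu.hasFDerivAt.const_mul c

lemma gradient_norm_sq (x : E) : ∇ (fun y : E => ‖y‖ ^ 2) x = (2 : ℝ) • x := by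
  refine HasGradientAt.gradient (hasGradientAt_iff_hasFDerivAt.2 ?_)
  rw [ofNat_smul_eq_nsmul ℝ, map_nsmul]
  exact (hasStrictFDerivAt_norm_sq x).hasFDerivAt

lemma gradient_log_norm (hx : x ≠ 0) : ∇ (fun y : E => log ‖y‖) x = (‖x‖ ^ 2)⁻¹ • x := by
  have hx2 : ‖x‖ ^ 2 ≠ 0 := pow_ne_zero 2 (norm_ne_zero_iff.2 hx)
  rw [log_norm_eq_half_log_norm_sq, gradient_comp (g := fun y : E => ‖y‖ ^ 2)
    ((differentiableAt_log hx2).const_mul _)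
    ((contDiff_norm_sq ℝ (n := 1)).differentiable one_ne_zero x), deriv_half_log,
    gradient_norm_sq, smul_smul]
  congr 1
  ring

lemma gradient_comp_log_norm {f : ℝ → ℝ} (hf : ContDiff ℝ 2 f) (hx : x ≠ 0) :
    ∇ (fun y : E => f (log ‖y‖)) x = (deriv f (log ‖x‖) * (‖x‖ ^ 2)⁻¹) • x := by
  rw [gradient_comp (hf.differentiable two_ne_zero _)
    ((contDiffAt_log_norm (n := 1) hx).differentiableAt one_ne_zero), gradient_log_norm hx,
    smul_smul]

end Gradient

variable [FiniteDimensional ℝ E]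

lemma laplacian_eq_sum_fderiv {ι : Type*} [Fintype ι] (b : OrthonormalBasis ι ℝ E)
    (hu : ContDiffAt ℝ 2 u x) :
    Δ u x = ∑ i, fderiv ℝ (fun y => fderiv ℝ u y (b i)) x (b i) := by
  have hd : DifferentiableAt ℝ (fderiv ℝ u) x :=
    (hu.fderiv_right (m := 1) (by norm_num)).differentiableAt one_ne_zero
  rw [laplacian_eq_iteratedFDeriv_orthonormalBasis u b]
  refine Finset.sum_congr rfl fun i _ => ?_
  rw [iteratedFDeriv_two_apply, fderiv_clm_apply hd (differentiableAt_const _)]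
  simp

lemma continuousAt_laplacian (hu : ContDiffAt ℝ 2 u x) : ContinuousAt (Δ u) x := by
  let b := stdOrthonormalBasis ℝ E
  have h : Δ u =ᶠ[𝓝 x] fun z => ∑ i, fderiv ℝ (fun y => fderiv ℝ u y (b i)) z (b i) := by
    filter_upwards [hu.eventually (by decide)] with y hy
    exact laplacian_eq_sum_fderiv b hy
  refine ContinuousAt.congr ?_ h.symm
  exact tendsto_finsetSum _ fun i _ => continuousAt_fderiv_fderiv_apply hu (b i)

lemma sum_fderiv_mul_fderiv {ι : Type*} [Fintype ι] (b : OrthonormalBasis ι ℝ E) :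
    ∑ i, fderiv ℝ u x (b i) * fderiv ℝ v x (b i) = ⟪∇ u x, ∇ v x⟫_ℝ := by
  rw [← b.sum_inner_mul_inner]
  refine Finset.sum_congr rfl fun i _ => ?_
  rw [inner_gradient_left, real_inner_comm, inner_gradient_left]

lemma laplacian_const_mul (c : ℝ) (hu : ContDiffAt ℝ 2 u x) :
    Δ (fun y => c * u y) x = c * Δ u x :=
  laplacian_smul c hu

lemma laplacian_mul (hu : ContDiffAt ℝ 2 u x) (hv : ContDiffAt ℝ 2 v x) :
    Δ (fun y => u y * v y) x = u x * Δ v x + v x * Δ u x + 2 * ⟪∇ u x, ∇ v x⟫_ℝ := by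
  let b := stdOrthonormalBasis ℝ E
  rw [laplacian_eq_sum_fderiv b (hu.mul hv), laplacian_eq_sum_fderiv b hu,
    laplacian_eq_sum_fderiv b hv, ← sum_fderiv_mul_fderiv b, Finset.mul_sum, Finset.mul_sum,
    Finset.mul_sum, ← Finset.sum_add_distrib, ← Finset.sum_add_distrib]
  refine Finset.sum_congr rfl fun i _ => ?_
  have hdu := hu.differentiableAt two_ne_zero
  have hdv := hv.differentiableAt two_ne_zero
  have hfirst : (fun y => fderiv ℝ (fun z => u z * v z) y (b i)) =ᶠ[𝓝 x]
      fun y => u y * fderiv ℝ v y (b i) + v y * fderiv ℝ u y (b i) := by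
    filter_upwards [hu.eventually (by decide), hv.eventually (by decide)] with y hy hy'
    simp [fderiv_fun_mul (hy.differentiableAt two_ne_zero) (hy'.differentiableAt two_ne_zero)]
  have hdu' := differentiableAt_fderiv_apply hu (b i)
  have hdv' := differentiableAt_fderiv_apply hv (b i)
  rw [hfirst.fderiv_eq, fderiv_fun_add (hdu.fun_mul hdv') (hdv.fun_mul hdu'),
    fderiv_fun_mul hdu hdv', fderiv_fun_mul hdv hdu']
  simp only [add_apply, smul_apply, smul_eq_mul]
  ring

lemma laplacian_comp {F : ℝ → ℝ} (hF : ContDiffAt ℝ 2 F (g x)) (hg : ContDiffAt ℝ 2 g x) :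
    Δ (fun y => F (g y)) x
      = deriv F (g x) * Δ g x + deriv (deriv F) (g x) * ‖∇ g x‖ ^ 2 := by
  let b := stdOrthonormalBasis ℝ E
  have hFg : ContDiffAt ℝ 2 (fun y => F (g y)) x := hF.comp x hg
  rw [laplacian_eq_sum_fderiv b hFg, laplacian_eq_sum_fderiv b hg, ← real_inner_self_eq_norm_sq,
    ← sum_fderiv_mul_fderiv b, Finset.mul_sum, Finset.mul_sum, ← Finset.sum_add_distrib]
  refine Finset.sum_congr rfl fun i _ => ?_
  have hdg := hg.differentiableAt two_ne_zero
  have hfirst : (fun y => fderiv ℝ (fun z => F (g z)) y (b i)) =ᶠ[𝓝 x]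
      fun y => deriv F (g y) * fderiv ℝ g y (b i) := by
    filter_upwards [hg.continuousAt.eventually (hF.eventually (by decide)),
      hg.eventually (by decide)] with y hy hy'
    have := (hy.differentiableAt two_ne_zero).hasDerivAt.comp_hasFDerivAt y
      (hy'.differentiableAt two_ne_zero).hasFDerivAt
    exact congrArg (fun L : E →L[ℝ] ℝ => L (b i)) this.fderiv
  have hdF : DifferentiableAt ℝ (deriv F) (g x) :=
    differentiableAt_fderiv_apply hF 1
  have hFg' : HasFDerivAt (fun y => deriv F (g y)) (deriv (deriv F) (g x) • fderiv ℝ g x) x :=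
    hdF.hasDerivAt.comp_hasFDerivAt x hdg.hasFDerivAt
  rw [hfirst.fderiv_eq, fderiv_fun_mul hFg'.differentiableAt
    (differentiableAt_fderiv_apply hg (b i)), hFg'.fderiv]
  simp only [add_apply, smul_apply, smul_eq_mul, add_right_inj]
  ring

lemma laplacian_norm_sq (x : E) :
    Δ (fun y : E => ‖y‖ ^ 2) x = 2 * Module.finrank ℝ E := by
  let b := stdOrthonormalBasis ℝ E
  have hfirst : ∀ i, (fun y => fderiv ℝ (fun z : E => ‖z‖ ^ 2) y (b i))
      = innerSL ℝ ((2 : ℝ) • b i) := by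
    intro i
    funext y
    rw [← inner_gradient_left, gradient_norm_sq, innerSL_apply_apply, inner_smul_left,
      inner_smul_left, real_inner_comm]
  rw [laplacian_eq_sum_fderiv b (contDiff_norm_sq ℝ).contDiffAt]
  simp_rw [hfirst, ContinuousLinearMap.fderiv, innerSL_apply_apply, inner_smul_left,
    real_inner_self_eq_norm_sq, b.norm_eq_one]
  simp [mul_comm]

lemma laplacian_log_norm (hx : x ≠ 0) :
    Δ (fun y : E => log ‖y‖) x = (Module.finrank ℝ E - 2) * (‖x‖ ^ 2)⁻¹ := by
  have hx2 : ‖x‖ ^ 2 ≠ 0 := pow_ne_zero 2 (norm_ne_zero_iff.2 hx)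
  rw [log_norm_eq_half_log_norm_sq, laplacian_comp (g := fun y : E => ‖y‖ ^ 2)
    (contDiffAt_const.mul (contDiffAt_log.2 hx2))
    (contDiff_norm_sq ℝ).contDiffAt, deriv_half_log, laplacian_norm_sq, gradient_norm_sq,
    norm_smul, deriv_const_mul _ (differentiableAt_inv hx2), deriv_inv]
  simp only [norm_ofNat]
  field_simp
  ring

lemma laplacian_comp_log_norm {f : ℝ → ℝ} (hf : ContDiff ℝ 2 f) (hx : x ≠ 0) :
    Δ (fun y : E => f (log ‖y‖)) x
      = (deriv (deriv f) (log ‖x‖) + (Module.finrank ℝ E - 2) * deriv f (log ‖x‖))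
        * (‖x‖ ^ 2)⁻¹ := by
  have hx' : ‖x‖ ≠ 0 := norm_ne_zero_iff.2 hx
  have hgrad : ‖∇ (fun y : E => log ‖y‖) x‖ ^ 2 = (‖x‖ ^ 2)⁻¹ := by
    rw [gradient_log_norm hx, norm_smul, norm_inv, norm_pow, norm_norm]
    field_simp
  rw [laplacian_comp hf.contDiffAt (contDiffAt_log_norm hx), hgrad, laplacian_log_norm hx]
  ring

lemma laplacian_log (hu : ContDiffAt ℝ 2 u x) (hpos : 0 < u x) :
    Δ (fun y => log (u y)) x = Δ u x / u x - ‖∇ (fun y => log (u y)) x‖ ^ 2 := by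
  rw [laplacian_comp (contDiffAt_log.2 hpos.ne') hu,
    gradient_comp (differentiableAt_log hpos.ne') (hu.differentiableAt two_ne_zero), norm_smul,
    deriv_log', deriv_inv, norm_inv, Real.norm_of_nonneg hpos.le]
  field_simp
  ring

lemma laplacian_exp (hu : ContDiffAt ℝ 2 u x) :
    Δ (fun y => exp (u y)) x = exp (u x) * (Δ u x + ‖∇ u x‖ ^ 2) := by
  rw [laplacian_comp contDiff_exp.contDiffAt hu, Real.deriv_exp, Real.deriv_exp]
  ring

lemma laplacian_rpow_mul_rpow_le {K a b : ℝ} (hu : ContDiffAt ℝ 2 u x) (hv : ContDiffAt ℝ 2 v x)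
    (hupos : 0 < u x) (hvpos : 0 < v x) (ha : 0 ≤ a) (hb : 0 ≤ b) (hab : a + b = 1)
    (hΔu : Δ u x ≤ -K * u x) (hΔv : Δ v x ≤ -K * v x) :
    Δ (fun y => u y ^ a * v y ^ b) x ≤ -K * (u x ^ a * v x ^ b) := by
  have hlu : ContDiffAt ℝ 2 (fun y => log (u y)) x := hu.log hupos.ne'
  have hlv : ContDiffAt ℝ 2 (fun y => log (v y)) x := hv.log hvpos.ne'
  have hau : ContDiffAt ℝ 2 (fun y => a * log (u y)) x := contDiffAt_const.mul hlu
  have hbv : ContDiffAt ℝ 2 (fun y => b * log (v y)) x := contDiffAt_const.mul hlv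
  have hexp : (fun y => u y ^ a * v y ^ b) =ᶠ[𝓝 x]
      fun y => exp (a * log (u y) + b * log (v y)) := by
    filter_upwards [hu.continuousAt.eventually (lt_mem_nhds hupos),
      hv.continuousAt.eventually (lt_mem_nhds hvpos)] with y hy hy'
    exact rpow_mul_rpow_eq_exp hy hy' a b
  have hΔ : Δ (fun y => a * log (u y) + b * log (v y)) x
      = a * Δ (fun y => log (u y)) x + b * Δ (fun y => log (v y)) x := by
    rw [← laplacian_const_mul a hlu, ← laplacian_const_mul b hlv]
    exact hau.laplacian_add hbv
  have hgrad := norm_convexCombination_sq_le ha hb hab (∇ (fun y => log (u y)) x)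
    (∇ (fun y => log (v y)) x)
  have hu' : Δ u x / u x ≤ -K := (div_le_iff₀ hupos).2 hΔu
  have hv' : Δ v x / v x ≤ -K := (div_le_iff₀ hvpos).2 hΔv
  rw [(laplacian_congr_nhds hexp).eq_of_nhds, laplacian_exp (hau.add hbv),
    rpow_mul_rpow_eq_exp hupos hvpos, hΔ, gradient_add (hau.differentiableAt two_ne_zero)
    (hbv.differentiableAt two_ne_zero), gradient_const_mul a (hlu.differentiableAt two_ne_zero),
    gradient_const_mul b (hlv.differentiableAt two_ne_zero), laplacian_log hu hupos,
    laplacian_log hv hvpos, mul_comm (-K)]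
  refine mul_le_mul_of_nonneg_left ?_ (exp_pos _).le
  linarith [mul_le_mul_of_nonneg_left hu' ha, mul_le_mul_of_nonneg_left hv' hb,
    show a * -K + b * -K = -K by rw [← add_mul, hab, one_mul]]

lemma tsupport_laplacian_subset : tsupport (Δ u) ⊆ tsupport u := by
  refine closure_minimal (fun x hx => ?_) (isClosed_tsupport u)
  by_contra hxu
  refine hx ?_
  rw [(laplacian_congr_nhds (notMem_tsupport_iff_eventuallyEq.1 hxu)).eq_of_nhds]
  exact congrFun (laplacian_const (c := (0 : ℝ))) x

end Laplacian

section Green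

variable {E : Type*} [NormedAddCommGroup E] [InnerProductSpace ℝ E] [FiniteDimensional ℝ E]
  [MeasurableSpace E] [BorelSpace E] {ν : Measure E} [ν.IsAddHaarMeasure] {ψ w : E → ℝ}

lemma integrable_mul_of_tsupport_subset {X : Type*} [TopologicalSpace X] [MeasurableSpace X]
    [OpensMeasurableSpace X] {ν : Measure X} [IsFiniteMeasureOnCompacts ν] {K : Set X}
    {a b : X → ℝ} (hK : IsCompact K) (haK : tsupport a ⊆ K) (ha : Continuous a)
    (hb : ∀ x ∈ K, ContinuousAt b x) : Integrable (fun x => a x * b x) ν := by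
  have hsub : tsupport (fun x => a x * b x) ⊆ tsupport a := tsupport_mul_subset_left
  refine Continuous.integrable_of_hasCompactSupport
    (continuous_of_tsupport fun x hx => ha.continuousAt.mul (hb x (haK (hsub hx)))) ?_
  exact hK.of_isClosed_subset (isClosed_tsupport _) (hsub.trans haK)

lemma integral_mul_fderiv_fderiv_comm (hψ : ContDiff ℝ 2 ψ) (hc : HasCompactSupport ψ)
    (hw : ∀ x ∈ tsupport ψ, ContDiffAt ℝ 2 w x) (e : E) :
    ∫ x, ψ x * fderiv ℝ (fun y => fderiv ℝ w y e) x e ∂ν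
      = ∫ x, fderiv ℝ (fun y => fderiv ℝ ψ y e) x e * w x ∂ν := by
  have hψ' : ContDiff ℝ 1 (fun y => fderiv ℝ ψ y e) :=
    (hψ.fderiv_right (by norm_num)).clm_apply contDiff_const
  have hsupp : tsupport (fun y => fderiv ℝ ψ y e) ⊆ tsupport ψ :=
    tsupport_fderiv_apply_subset ℝ e
  have hsupp' : tsupport (fun z => fderiv ℝ (fun y => fderiv ℝ ψ y e) z e) ⊆ tsupport ψ :=
    (tsupport_fderiv_apply_subset ℝ e).trans hsupp
  have hwc : ∀ x ∈ tsupport ψ, ContinuousAt w x := fun x hx => (hw x hx).continuousAt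
  have hwc' : ∀ x ∈ tsupport ψ, ContinuousAt (fun y => fderiv ℝ w y e) x := fun x hx =>
    (differentiableAt_fderiv_apply (hw x hx) e).continuousAt
  have hint := integrable_mul_of_tsupport_subset (ν := ν) hc hsupp hψ'.continuous hwc'
  rw [integral_mul_fderiv_eq_neg_fderiv_mul_of_integrable hint
      (integrable_mul_of_tsupport_subset hc subset_rfl hψ.continuous fun x hx =>
        continuousAt_fderiv_fderiv_apply (hw x hx) e)
      (integrable_mul_of_tsupport_subset hc subset_rfl hψ.continuous hwc')
      (fun x _ => hψ.differentiable two_ne_zero x)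
      (fun x hx => differentiableAt_fderiv_apply (hw x hx) e),
    integral_mul_fderiv_eq_neg_fderiv_mul_of_integrable
      (integrable_mul_of_tsupport_subset hc hsupp' (continuous_iff_continuousAt.2 fun x =>
        continuousAt_fderiv_fderiv_apply hψ.contDiffAt e) hwc) hint
      (integrable_mul_of_tsupport_subset hc hsupp hψ'.continuous hwc)
      (fun x _ => hψ'.differentiable one_ne_zero x)
      (fun x hx => (hw x (hsupp hx)).differentiableAt two_ne_zero), neg_neg]

theorem integral_mul_laplacian_comm (hψ : ContDiff ℝ 2 ψ) (hc : HasCompactSupport ψ)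
    (hw : ∀ x ∈ tsupport ψ, ContDiffAt ℝ 2 w x) :
    ∫ x, ψ x * Δ w x ∂ν = ∫ x, w x * Δ ψ x ∂ν := by
  let b := stdOrthonormalBasis ℝ E
  have hΔw : (fun x => ψ x * Δ w x)
      = fun x => ∑ i, ψ x * fderiv ℝ (fun y => fderiv ℝ w y (b i)) x (b i) := by
    funext x
    by_cases hx : x ∈ tsupport ψ
    · rw [laplacian_eq_sum_fderiv b (hw x hx), Finset.mul_sum]
    · simp [image_eq_zero_of_notMem_tsupport hx]
  have hΔψ : (fun x => w x * Δ ψ x)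
      = fun x => ∑ i, fderiv ℝ (fun y => fderiv ℝ ψ y (b i)) x (b i) * w x := by
    funext x
    rw [laplacian_eq_sum_fderiv b hψ.contDiffAt, mul_comm, Finset.sum_mul]
  have hsupp : ∀ e, tsupport (fun z => fderiv ℝ (fun y => fderiv ℝ ψ y e) z e) ⊆ tsupport ψ :=
    fun e => (tsupport_fderiv_apply_subset ℝ e).trans (tsupport_fderiv_apply_subset ℝ e)
  rw [hΔw, hΔψ, integral_finsetSum, integral_finsetSum]
  · exact Finset.sum_congr rfl fun i _ => integral_mul_fderiv_fderiv_comm hψ hc hw (b i)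
  · exact fun i _ => integrable_mul_of_tsupport_subset hc (hsupp _)
      (continuous_iff_continuousAt.2 fun x => continuousAt_fderiv_fderiv_apply hψ.contDiffAt _)
      fun x hx => (hw x hx).continuousAt
  · exact fun i _ => integrable_mul_of_tsupport_subset hc subset_rfl hψ.continuous fun x hx =>
      continuousAt_fderiv_fderiv_apply (hw x hx) _

end Green

section OneVariable

lemma deriv_smoothTransition_nonneg (x : ℝ) : 0 ≤ deriv smoothTransition x :=
  smoothTransition.monotone.deriv_nonneg

lemma deriv_smoothTransition_eq_zero {x : ℝ} (hx : x ≤ 0 ∨ 1 ≤ x) :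
    deriv smoothTransition x = 0 := by
  rcases hx with hx | hx
  · refine IsLocalMin.deriv_eq_zero (Eventually.of_forall fun y => ?_)
    rw [smoothTransition.zero_of_nonpos hx]
    exact smoothTransition.nonneg y
  · refine IsLocalMax.deriv_eq_zero (Eventually.of_forall fun y => ?_)
    rw [smoothTransition.one_of_one_le hx]
    exact smoothTransition.le_one y

lemma deriv_deriv_smoothTransition_eq_zero {x : ℝ} (hx : x ≤ 0 ∨ 1 ≤ x) :
    deriv (deriv smoothTransition) x = 0 := by
  refine IsLocalMin.deriv_eq_zero (Eventually.of_forall fun y => ?_)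
  rw [deriv_smoothTransition_eq_zero hx]
  exact deriv_smoothTransition_nonneg y

lemma contDiff_deriv_smoothTransition : ContDiff ℝ 2 (deriv smoothTransition) :=
  (contDiff_succ_iff_deriv (n := 2)).1 (smoothTransition.contDiff (n := 3)) |>.2.2

lemma exists_deriv_smoothTransition_pos : ∃ x ∈ Ioo (0 : ℝ) 1, 0 < deriv smoothTransition x := by
  obtain ⟨x, hx, hslope⟩ := exists_deriv_eq_slope smoothTransition one_pos
    smoothTransition.continuous.continuousOn
    (smoothTransition.contDiff (n := 1)).differentiable_one.differentiableOn
  refine ⟨x, hx, ?_⟩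
  rw [hslope]
  norm_num

lemma exists_abs_deriv_smoothTransition_le :
    ∃ M, ∀ x, |deriv smoothTransition x| ≤ M ∧ |deriv (deriv smoothTransition) x| ≤ M := by
  have hcont : Continuous fun x =>
      max |deriv smoothTransition x| |deriv (deriv smoothTransition) x| :=
    contDiff_deriv_smoothTransition.continuous.abs.max
      (contDiff_deriv_smoothTransition.continuous_deriv (by norm_num)).abs
  obtain ⟨M, hM⟩ := (isCompact_Icc (a := (0 : ℝ)) (b := 1)).bddAbove_image hcont.continuousOn
  refine ⟨max M 0, fun x => max_le_iff.1 ?_⟩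
  by_cases hx : x ∈ Icc (0 : ℝ) 1
  · exact (hM (mem_image_of_mem _ hx)).trans (le_max_left _ _)
  · have hx' : x ≤ 0 ∨ 1 ≤ x := by
      rw [mem_Icc, not_and_or, not_le, not_le] at hx
      exact hx.imp le_of_lt le_of_lt
    simp [deriv_smoothTransition_eq_zero hx', deriv_deriv_smoothTransition_eq_zero hx']

/-- The smooth ramp with `g 0 = 0` and `g' = exp (d x) * smoothTransition x`: it vanishes on
`(-∞, 0]` and solves `g'' = d g'` on `[1, ∞)`. For `d = 0` it is convex with slope in `[0, 1]`. -/
def expRamp (d x : ℝ) : ℝ := ∫ t in (0 : ℝ)..x, exp (d * t) * smoothTransition t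

variable {d x τ ε : ℝ}

lemma continuous_exp_mul_smoothTransition (d : ℝ) :
    Continuous fun t => exp (d * t) * smoothTransition t :=
  (continuous_exp.comp (continuous_const.mul continuous_id)).mul smoothTransition.continuous

lemma hasDerivAt_expRamp (d x : ℝ) :
    HasDerivAt (expRamp d) (exp (d * x) * smoothTransition x) x :=
  (continuous_exp_mul_smoothTransition d).integral_hasStrictDerivAt 0 x |>.hasDerivAt

lemma deriv_expRamp (d x : ℝ) : deriv (expRamp d) x = exp (d * x) * smoothTransition x :=
  (hasDerivAt_expRamp d x).deriv

lemma contDiff_expRamp (d : ℝ) : ContDiff ℝ 2 (expRamp d) := by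
  refine (contDiff_succ_iff_deriv (n := 1)).2
    ⟨fun x => (hasDerivAt_expRamp d x).differentiableAt, by simp, ?_⟩
  rw [funext (deriv_expRamp d)]
  exact (contDiff_exp.comp (contDiff_const.mul contDiff_id)).mul smoothTransition.contDiff

lemma hasDerivAt_deriv_expRamp (d x : ℝ) :
    HasDerivAt (deriv (expRamp d))
      (d * deriv (expRamp d) x + exp (d * x) * deriv smoothTransition x) x := by
  have hexp : HasDerivAt (fun x => exp (d * x)) (exp (d * x) * (d * 1)) x :=
    ((hasDerivAt_id x).const_mul d).exp
  have hK : HasDerivAt smoothTransition (deriv smoothTransition x) x :=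
    ((smoothTransition.contDiff (n := 1)).differentiable_one x).hasDerivAt
  rw [deriv_expRamp, funext (deriv_expRamp d)]
  refine (hexp.fun_mul hK).congr_deriv ?_
  ring

lemma deriv_expRamp_nonneg (d x : ℝ) : 0 ≤ deriv (expRamp d) x := by
  rw [deriv_expRamp]
  exact mul_nonneg (exp_pos _).le (smoothTransition.nonneg x)

lemma deriv_expRamp_le (d x : ℝ) : deriv (expRamp d) x ≤ exp (d * x) := by
  rw [deriv_expRamp]
  exact mul_le_of_le_one_right (exp_pos _).le (smoothTransition.le_one x)

lemma monotone_expRamp (d : ℝ) : Monotone (expRamp d) :=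
  monotone_of_deriv_nonneg ((contDiff_expRamp d).differentiable two_ne_zero)
    (deriv_expRamp_nonneg d)

lemma expRamp_of_nonpos (d : ℝ) (hx : x ≤ 0) : expRamp d x = 0 := by
  rw [expRamp, intervalIntegral.integral_congr (g := fun _ => 0) fun t ht => ?_]
  · simp
  · rw [uIcc_of_ge hx] at ht
    simp [smoothTransition.zero_of_nonpos ht.2]

lemma expRamp_nonneg (d x : ℝ) : 0 ≤ expRamp d x := by
  rcases le_total x 0 with hx | hx
  · exact (expRamp_of_nonpos d hx).ge
  · exact (expRamp_of_nonpos d le_rfl).ge.trans (monotone_expRamp d hx)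

lemma expRamp_sub_le {y : ℝ} (hd : 0 ≤ d) (hxy : x ≤ y) :
    expRamp d y - expRamp d x ≤ exp (d * y) * (y - x) := by
  refine (convex_Icc x y).image_sub_le_mul_sub_of_deriv_le
    (contDiff_expRamp d).continuous.continuousOn
    ((contDiff_expRamp d).differentiable two_ne_zero).differentiableOn (fun z hz => ?_)
    x (left_mem_Icc.2 hxy) y (right_mem_Icc.2 hxy) hxy
  rw [interior_Icc] at hz
  exact (deriv_expRamp_le d z).trans (exp_le_exp.2 (mul_le_mul_of_nonneg_left hz.2.le hd))

lemma le_expRamp_sub {y : ℝ} (hd : 0 ≤ d) (hx : 1 ≤ x) (hxy : x ≤ y) :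
    exp (d * x) * (y - x) ≤ expRamp d y - expRamp d x := by
  refine (convex_Icc x y).mul_sub_le_image_sub_of_le_deriv
    (contDiff_expRamp d).continuous.continuousOn
    ((contDiff_expRamp d).differentiable two_ne_zero).differentiableOn (fun z hz => ?_)
    x (left_mem_Icc.2 hxy) y (right_mem_Icc.2 hxy) hxy
  rw [interior_Icc] at hz
  rw [deriv_expRamp, smoothTransition.one_of_one_le (hx.trans hz.1.le), mul_one]
  exact exp_le_exp.2 (mul_le_mul_of_nonneg_left hz.1.le hd)

lemma expRamp_le (hd : 0 ≤ d) (hx : 0 ≤ x) : expRamp d x ≤ exp (d * x) * x := by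
  simpa [expRamp_of_nonpos d le_rfl] using expRamp_sub_le hd hx

lemma sub_one_le_expRamp_zero (x : ℝ) : x - 1 ≤ expRamp 0 x := by
  rcases le_total x 1 with hx | hx
  · linarith [expRamp_nonneg 0 x]
  · have := le_expRamp_sub le_rfl le_rfl hx
    rw [zero_mul, exp_zero] at this
    linarith [expRamp_nonneg 0 1]

lemma expRamp_zero_le (hx : 0 ≤ x) : expRamp 0 x ≤ x := by
  simpa using expRamp_le le_rfl hx

/-- Convex `C²` approximation of the identity on `[0, ∞)` that vanishes on `[0, ε]`; it truncates
an eigenfunction away from the boundary of its domain. -/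
def softTrunc (ε t : ℝ) : ℝ := ε * expRamp 0 (t / ε - 1)

lemma hasDerivAt_softTrunc (hε : ε ≠ 0) (t : ℝ) :
    HasDerivAt (softTrunc ε) (smoothTransition (t / ε - 1)) t := by
  have h := ((hasDerivAt_expRamp 0 (t / ε - 1)).comp t
    (((hasDerivAt_id t).div_const ε).sub_const 1)).const_mul ε
  refine h.congr_deriv ?_
  rw [zero_mul, exp_zero]
  field_simp

lemma contDiff_softTrunc (ε : ℝ) : ContDiff ℝ 2 (softTrunc ε) :=
  contDiff_const.mul ((contDiff_expRamp 0).comp ((contDiff_id.div_const ε).sub contDiff_const))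

lemma deriv_deriv_softTrunc_nonneg (hε : 0 < ε) (t : ℝ) : 0 ≤ deriv (deriv (softTrunc ε)) t := by
  rw [funext fun t => (hasDerivAt_softTrunc hε.ne' t).deriv]
  refine Monotone.deriv_nonneg fun a b hab => smoothTransition.monotone ?_
  gcongr

lemma softTrunc_nonneg (hε : 0 ≤ ε) (t : ℝ) : 0 ≤ softTrunc ε t :=
  mul_nonneg hε (expRamp_nonneg _ _)

lemma softTrunc_eq_zero {t : ℝ} (hε : 0 < ε) (ht : t ≤ ε) : softTrunc ε t = 0 := by
  rw [softTrunc, expRamp_of_nonpos, mul_zero]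
  linarith [(div_le_one hε).2 ht]

lemma softTrunc_le {t : ℝ} (hε : 0 < ε) (ht : 0 ≤ t) : softTrunc ε t ≤ t := by
  rcases le_total t ε with htε | htε
  · rwa [softTrunc_eq_zero hε htε]
  · have h1 : 1 ≤ t / ε := (one_le_div hε).2 htε
    calc softTrunc ε t ≤ ε * (t / ε - 1) :=
          mul_le_mul_of_nonneg_left (expRamp_zero_le (by linarith)) hε.le
      _ = t - ε := by field_simp
      _ ≤ t := by linarith

lemma sub_le_softTrunc (hε : 0 < ε) (t : ℝ) : t - 2 * ε ≤ softTrunc ε t :=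
  calc t - 2 * ε = ε * (t / ε - 1 - 1) := by field_simp; ring
    _ ≤ softTrunc ε t := mul_le_mul_of_nonneg_left (sub_one_le_expRamp_zero _) hε.le

lemma tendsto_softTrunc {t : ℝ} (ht : 0 ≤ t) :
    Tendsto (fun ε => softTrunc ε t) (𝓝[>] 0) (𝓝 t) := by
  have hlow : Tendsto (fun ε : ℝ => t - 2 * ε) (𝓝[>] 0) (𝓝 t) := by
    have : Continuous fun ε : ℝ => t - 2 * ε := by fun_prop
    simpa using (this.tendsto 0).mono_left nhdsWithin_le_nhds
  refine tendsto_of_tendsto_of_tendsto_of_le_of_le' hlow tendsto_const_nhds ?_ ?_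
  · filter_upwards [self_mem_nhdsWithin] with ε hε using sub_le_softTrunc hε t
  · filter_upwards [self_mem_nhdsWithin] with ε hε using softTrunc_le hε ht

lemma tendsto_deriv_softTrunc {t : ℝ} (ht : 0 < t) :
    Tendsto (fun ε => deriv (softTrunc ε) t) (𝓝[>] 0) (𝓝 1) := by
  refine tendsto_const_nhds.congr' ?_
  filter_upwards [Ioo_mem_nhdsGT (half_pos ht)] with ε hε
  rw [(hasDerivAt_softTrunc hε.1.ne' t).deriv, smoothTransition.one_of_one_le]
  have : 2 ≤ t / ε := (le_div_iff₀ hε.1).2 (by linarith [hε.2])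
  linarith

lemma deriv_softTrunc_mem_Icc (hε : ε ≠ 0) (t : ℝ) : deriv (softTrunc ε) t ∈ Icc (0 : ℝ) 1 := by
  rw [(hasDerivAt_softTrunc hε t).deriv]
  exact ⟨smoothTransition.nonneg _, smoothTransition.le_one _⟩

/-- The descending ramp supported in `(-∞, 2τ]` that meets `expRamp d` at `x = τ`. -/
def descRamp (d τ x : ℝ) : ℝ := expRamp d τ / expRamp 0 τ * expRamp 0 (2 * τ - x)

/-- The bump on `[0, 2τ]` that follows `expRamp d` up to `τ` and `descRamp d τ` from `τ + 1` on. -/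
def rampBump (d τ x : ℝ) : ℝ :=
  expRamp d x + smoothTransition (x - τ) * (descRamp d τ x - expRamp d x)

lemma contDiff_descRamp (d τ : ℝ) : ContDiff ℝ 2 (descRamp d τ) :=
  contDiff_const.mul ((contDiff_expRamp 0).comp (contDiff_const.sub contDiff_id))

lemma contDiff_rampBump (d τ : ℝ) : ContDiff ℝ 2 (rampBump d τ) :=
  (contDiff_expRamp d).add ((smoothTransition.contDiff.comp (contDiff_id.sub contDiff_const)).mul
    ((contDiff_descRamp d τ).sub (contDiff_expRamp d)))

lemma rampBump_eq_convexCombination (d τ x : ℝ) :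
    rampBump d τ x = (1 - smoothTransition (x - τ)) * expRamp d x
      + smoothTransition (x - τ) * descRamp d τ x := by
  rw [rampBump]
  ring

lemma descRamp_nonneg (d τ x : ℝ) : 0 ≤ descRamp d τ x :=
  mul_nonneg (div_nonneg (expRamp_nonneg _ _) (expRamp_nonneg _ _)) (expRamp_nonneg _ _)

lemma rampBump_nonneg (d τ x : ℝ) : 0 ≤ rampBump d τ x := by
  rw [rampBump_eq_convexCombination]
  exact add_nonneg (mul_nonneg (sub_nonneg.2 (smoothTransition.le_one _)) (expRamp_nonneg _ _))
    (mul_nonneg (smoothTransition.nonneg _) (descRamp_nonneg _ _ _))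

lemma support_rampBump_subset (hτ : 1 ≤ τ) : Function.support (rampBump d τ) ⊆ Icc 0 (2 * τ) := by
  intro x hx
  by_contra hx'
  refine hx ?_
  rw [mem_Icc, not_and_or, not_le, not_le] at hx'
  rcases hx' with hx' | hx'
  · rw [rampBump, expRamp_of_nonpos d hx'.le, smoothTransition.zero_of_nonpos (by linarith)]
    ring
  · rw [rampBump_eq_convexCombination, smoothTransition.one_of_one_le (by linarith), descRamp,
      expRamp_of_nonpos 0 (x := 2 * τ - x) (by linarith)]
    ring

lemma exp_le_expRamp (hd : 0 ≤ d) (hτ : 2 ≤ τ) : exp (d * (τ - 1)) ≤ expRamp d τ := by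
  have h := le_expRamp_sub hd (x := τ - 1) (y := τ) (by linarith) (by linarith)
  linarith [expRamp_nonneg d (τ - 1)]

lemma expRamp_div_expRamp_zero_le (hd : 0 ≤ d) (hτ : 2 ≤ τ) :
    expRamp d τ / expRamp 0 τ ≤ 2 * exp (d * τ) := by
  have hP := sub_one_le_expRamp_zero τ
  rw [div_le_iff₀ (by linarith)]
  calc expRamp d τ ≤ exp (d * τ) * τ := expRamp_le hd (by linarith)
    _ ≤ exp (d * τ) * (2 * expRamp 0 τ) := by gcongr; linarith
    _ = _ := by ring

lemma exp_le_rampBump (hd : 0 ≤ d) (hτ : 3 ≤ τ) (hx : x ∈ Ico τ (τ + 1)) :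
    exp (-d) / 3 * exp (d * τ) ≤ rampBump d τ x := by
  have hPτ := sub_one_le_expRamp_zero τ
  have hPx : expRamp 0 τ / 3 ≤ expRamp 0 (2 * τ - x) := by
    linarith [expRamp_zero_le (x := τ) (by linarith), sub_one_le_expRamp_zero (2 * τ - x), hx.2]
  have hg : expRamp d τ / 3 ≤ expRamp d x := by
    linarith [expRamp_nonneg d τ, monotone_expRamp d hx.1]
  have hq : expRamp d τ / 3 ≤ descRamp d τ x := by
    calc expRamp d τ / 3 = expRamp d τ / expRamp 0 τ * (expRamp 0 τ / 3) := by
          field_simp [show expRamp 0 τ ≠ 0 by linarith]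
      _ ≤ descRamp d τ x := mul_le_mul_of_nonneg_left hPx
          (div_nonneg (expRamp_nonneg _ _) (expRamp_nonneg _ _))
  calc exp (-d) / 3 * exp (d * τ) = exp (d * (τ - 1)) / 3 := by
        rw [div_mul_eq_mul_div, ← exp_add]; ring_nf
    _ ≤ expRamp d τ / 3 := by linarith [exp_le_expRamp hd (by linarith : 2 ≤ τ)]
    _ ≤ rampBump d τ x := by
        rw [rampBump_eq_convexCombination]
        nlinarith [mul_le_mul_of_nonneg_left hq (smoothTransition.nonneg (x - τ)),
          mul_le_mul_of_nonneg_left hg (sub_nonneg.2 (smoothTransition.le_one (x - τ)))]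

end OneVariable

section RampBump

variable {d x τ : ℝ}

lemma deriv_deriv_interpolate {g q θ : ℝ → ℝ} (hg : ContDiff ℝ 2 g) (hq : ContDiff ℝ 2 q)
    (hθ : ContDiff ℝ 2 θ) (d x : ℝ) :
    deriv (deriv fun y => g y + θ y * (q y - g y)) x
        - d * deriv (fun y => g y + θ y * (q y - g y)) x
      = (1 - θ x) * (deriv (deriv g) x - d * deriv g x)
        + θ x * (deriv (deriv q) x - d * deriv q x)
        + 2 * deriv θ x * (deriv q x - deriv g x)
        + (deriv (deriv θ) x - d * deriv θ x) * (q x - g x) := by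
  have hasDeriv {f : ℝ → ℝ} (hf : ContDiff ℝ 2 f) (y : ℝ) : HasDerivAt f (deriv f y) y :=
    (hf.differentiable two_ne_zero y).hasDerivAt
  have hasDeriv' {f : ℝ → ℝ} (hf : ContDiff ℝ 2 f) (y : ℝ) :
      HasDerivAt (deriv f) (deriv (deriv f) y) y :=
    ((hf.differentiable_deriv_two) y).hasDerivAt
  have hfirst : (deriv fun y => g y + θ y * (q y - g y))
      = fun y => deriv g y + (deriv θ y * (q y - g y) + θ y * (deriv q y - deriv g y)) := by
    funext y
    exact ((hasDeriv hg y).add ((hasDeriv hθ y).fun_mul ((hasDeriv hq y).fun_sub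
      (hasDeriv hg y)))).deriv
  rw [hfirst, ((hasDeriv' hg x).fun_add (((hasDeriv' hθ x).fun_mul ((hasDeriv hq x).fun_sub
    (hasDeriv hg x))).fun_add ((hasDeriv hθ x).fun_mul ((hasDeriv' hq x).fun_sub
    (hasDeriv' hg x))))).deriv]
  ring

lemma deriv_descRamp (d τ x : ℝ) :
    deriv (descRamp d τ) x
      = -(expRamp d τ / expRamp 0 τ * smoothTransition (2 * τ - x)) := by
  have h := ((hasDerivAt_expRamp 0 (2 * τ - x)).comp x
    ((hasDerivAt_id x).const_sub (2 * τ))).const_mul (expRamp d τ / expRamp 0 τ)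
  refine (h.congr_deriv ?_).deriv
  rw [zero_mul, exp_zero]
  ring

lemma deriv_deriv_descRamp (d τ x : ℝ) :
    deriv (deriv (descRamp d τ)) x
      = expRamp d τ / expRamp 0 τ * deriv smoothTransition (2 * τ - x) := by
  rw [funext (deriv_descRamp d τ)]
  simp [deriv_comp_const_sub]

lemma descRamp_supersol (hd : 0 ≤ d) (τ x : ℝ) :
    0 ≤ deriv (deriv (descRamp d τ)) x - d * deriv (descRamp d τ) x := by
  have hb : 0 ≤ expRamp d τ / expRamp 0 τ := div_nonneg (expRamp_nonneg _ _) (expRamp_nonneg _ _)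
  rw [deriv_deriv_descRamp, deriv_descRamp, mul_neg, sub_neg_eq_add]
  exact add_nonneg (mul_nonneg hb (deriv_smoothTransition_nonneg _))
    (mul_nonneg hd (mul_nonneg hb (smoothTransition.nonneg _)))

lemma exp_mul_le_of_mem_Ico (hd : 0 ≤ d) (hx : x ∈ Ico τ (τ + 1)) :
    exp (d * x) ≤ exp d * exp (d * τ) := by
  rw [← exp_add, exp_le_exp]
  nlinarith [mul_le_mul_of_nonneg_left hx.2.le hd]

lemma abs_deriv_descRamp_sub_deriv_expRamp_le (hd : 0 ≤ d) (hτ : 2 ≤ τ)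
    (hx : x ∈ Ico τ (τ + 1)) :
    |deriv (descRamp d τ) x - deriv (expRamp d) x| ≤ (2 + exp d) * exp (d * τ) := by
  have hb : 0 ≤ expRamp d τ / expRamp 0 τ := div_nonneg (expRamp_nonneg _ _) (expRamp_nonneg _ _)
  have hq : |deriv (descRamp d τ) x| ≤ 2 * exp (d * τ) := by
    rw [deriv_descRamp, abs_neg, abs_of_nonneg (mul_nonneg hb (smoothTransition.nonneg _))]
    exact (mul_le_of_le_one_right hb (smoothTransition.le_one _)).trans
      (expRamp_div_expRamp_zero_le hd hτ)
  have hg : |deriv (expRamp d) x| ≤ exp d * exp (d * τ) := by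
    rw [abs_of_nonneg (deriv_expRamp_nonneg d x)]
    exact (deriv_expRamp_le d x).trans (exp_mul_le_of_mem_Ico hd hx)
  linarith [abs_sub (deriv (descRamp d τ) x) (deriv (expRamp d) x)]

lemma abs_descRamp_sub_expRamp_le (hd : 0 ≤ d) (hτ : 2 ≤ τ) (hx : x ∈ Ico τ (τ + 1)) :
    |descRamp d τ x - expRamp d x| ≤ (2 + exp d) * exp (d * τ) := by
  have hb : 0 ≤ expRamp d τ / expRamp 0 τ := div_nonneg (expRamp_nonneg _ _) (expRamp_nonneg _ _)
  have hmeet : expRamp d τ = expRamp d τ / expRamp 0 τ * expRamp 0 τ := by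
    have := sub_one_le_expRamp_zero τ
    field_simp [show expRamp 0 τ ≠ 0 by linarith]
  have hfall : expRamp 0 τ - expRamp 0 (2 * τ - x) ≤ 1 := by
    have := expRamp_sub_le le_rfl (show 2 * τ - x ≤ τ by linarith [hx.1])
    rw [zero_mul, exp_zero] at this
    linarith [hx.2]
  have hq : expRamp d τ - descRamp d τ x ≤ 2 * exp (d * τ) :=
    calc expRamp d τ - descRamp d τ x
        = expRamp d τ / expRamp 0 τ * (expRamp 0 τ - expRamp 0 (2 * τ - x)) := by
          rw [mul_sub, ← hmeet, descRamp]
      _ ≤ 2 * exp (d * τ) := (mul_le_of_le_one_right hb hfall).trans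
          (expRamp_div_expRamp_zero_le hd hτ)
  have hg : expRamp d x - expRamp d τ ≤ exp d * exp (d * τ) :=
    (expRamp_sub_le hd hx.1).trans <| (mul_le_of_le_one_right (exp_pos _).le
      (by linarith [hx.2])).trans (exp_mul_le_of_mem_Ico hd hx)
  have hle : descRamp d τ x ≤ expRamp d τ := by
    rw [descRamp]
    conv_rhs => rw [hmeet]
    exact mul_le_mul_of_nonneg_left (monotone_expRamp 0 (by linarith [hx.1])) hb
  rw [abs_of_nonpos (by linarith [monotone_expRamp d hx.1])]
  linarith

lemma deriv_deriv_rampBump_sub (d τ x : ℝ) :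
    deriv (deriv (rampBump d τ)) x - d * deriv (rampBump d τ) x
      = (1 - smoothTransition (x - τ)) * (exp (d * x) * deriv smoothTransition x)
        + smoothTransition (x - τ) * (deriv (deriv (descRamp d τ)) x - d * deriv (descRamp d τ) x)
        + 2 * deriv smoothTransition (x - τ) * (deriv (descRamp d τ) x - deriv (expRamp d) x)
        + (deriv (deriv smoothTransition) (x - τ) - d * deriv smoothTransition (x - τ))
          * (descRamp d τ x - expRamp d x) := by
  have hθ : ContDiff ℝ 2 fun y => smoothTransition (y - τ) :=
    smoothTransition.contDiff.comp (contDiff_id.sub contDiff_const)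
  have hθ' : deriv (fun y => smoothTransition (y - τ)) = fun y => deriv smoothTransition (y - τ) :=
    funext fun y => deriv_comp_sub_const ..
  have hg : deriv (deriv (expRamp d)) x - d * deriv (expRamp d) x
      = exp (d * x) * deriv smoothTransition x := by
    rw [(hasDerivAt_deriv_expRamp d x).deriv]
    ring
  have h := deriv_deriv_interpolate (contDiff_expRamp d) (contDiff_descRamp d τ) hθ d x
  rwa [hθ', deriv_comp_sub_const, hg] at h

lemma le_rampBump_crossover_error {M : ℝ} (hd : 0 ≤ d) (hτ : 2 ≤ τ) (hx : x ∈ Ico τ (τ + 1))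
    (hM : ∀ x, |deriv smoothTransition x| ≤ M ∧ |deriv (deriv smoothTransition) x| ≤ M) :
    -((2 * M + (M + d * M)) * (2 + exp d) * exp (d * τ))
      ≤ 2 * deriv smoothTransition (x - τ) * (deriv (descRamp d τ) x - deriv (expRamp d) x)
        + (deriv (deriv smoothTransition) (x - τ) - d * deriv smoothTransition (x - τ))
          * (descRamp d τ x - expRamp d x) := by
  have hM0 : 0 ≤ M := (abs_nonneg _).trans (hM 0).1
  have h₁ : |2 * deriv smoothTransition (x - τ) * (deriv (descRamp d τ) x - deriv (expRamp d) x)|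
      ≤ 2 * M * ((2 + exp d) * exp (d * τ)) := by
    rw [abs_mul, abs_mul, abs_two]
    exact mul_le_mul (mul_le_mul_of_nonneg_left (hM _).1 zero_le_two)
      (abs_deriv_descRamp_sub_deriv_expRamp_le hd hτ hx) (abs_nonneg _) (by positivity)
  have hθ : |deriv (deriv smoothTransition) (x - τ) - d * deriv smoothTransition (x - τ)|
      ≤ M + d * M := by
    refine (abs_sub _ _).trans (add_le_add (hM _).2 ?_)
    rw [abs_mul, abs_of_nonneg hd]
    exact mul_le_mul_of_nonneg_left (hM _).1 hd
  have h₂ : |(deriv (deriv smoothTransition) (x - τ) - d * deriv smoothTransition (x - τ))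
      * (descRamp d τ x - expRamp d x)| ≤ (M + d * M) * ((2 + exp d) * exp (d * τ)) := by
    rw [abs_mul]
    exact mul_le_mul hθ (abs_descRamp_sub_expRamp_le hd hτ hx) (abs_nonneg _) (by positivity)
  linarith [(abs_le.1 h₁).1, (abs_le.1 h₂).1]

theorem exists_rampBump_supersol (hd : 0 ≤ d) : ∃ C, 0 ≤ C ∧ ∀ τ, 2 ≤ τ → ∀ x,
    exp (d * x) * deriv smoothTransition x - (Ico τ (τ + 1)).indicator (fun _ => C * exp (d * τ)) x
      ≤ deriv (deriv (rampBump d τ)) x - d * deriv (rampBump d τ) x := by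
  obtain ⟨M, hM⟩ := exists_abs_deriv_smoothTransition_le
  have hM0 : 0 ≤ M := (abs_nonneg _).trans (hM 0).1
  refine ⟨(2 * M + (M + d * M)) * (2 + exp d), by positivity, fun τ hτ x => ?_⟩
  have hq := mul_nonneg (smoothTransition.nonneg (x - τ)) (descRamp_supersol hd τ x)
  rw [deriv_deriv_rampBump_sub]
  by_cases hx : x ∈ Ico τ (τ + 1)
  · rw [indicator_of_mem hx, deriv_smoothTransition_eq_zero (x := x) (.inr (by linarith [hx.1]))]
    linarith [le_rampBump_crossover_error hd hτ hx hM]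
  · have hxτ : x - τ ≤ 0 ∨ 1 ≤ x - τ := by
      rw [mem_Ico, not_and_or, not_le, not_lt] at hx
      exact hx.imp (fun h => by linarith) fun h => by linarith
    rw [indicator_of_notMem hx, deriv_smoothTransition_eq_zero hxτ,
      deriv_deriv_smoothTransition_eq_zero hxτ]
    have hmain : exp (d * x) * deriv smoothTransition x
        ≤ (1 - smoothTransition (x - τ)) * (exp (d * x) * deriv smoothTransition x) := by
      rcases hxτ with h | h
      · rw [smoothTransition.zero_of_nonpos h, sub_zero, one_mul]
      · rw [deriv_smoothTransition_eq_zero (.inr (by linarith)), mul_zero, mul_zero]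
    linarith

end RampBump

section ConeGeometry

lemma inner_gradient_eq_zero_of_smul_invariant {E : Type*} [NormedAddCommGroup E]
    [InnerProductSpace ℝ E] [CompleteSpace E] {u : E → ℝ} {x : E} (hu : DifferentiableAt ℝ u x)
    (hinv : ∀ c : ℝ, 0 < c → u (c • x) = u x) : ⟪x, ∇ u x⟫_ℝ = 0 := by
  have hray : HasDerivAt (fun c : ℝ => c • x) x 1 := by
    simpa using (hasDerivAt_id (1 : ℝ)).smul_const x
  have hu' : HasFDerivAt u (fderiv ℝ u x) ((1 : ℝ) • x) := by
    simpa using hu.hasFDerivAt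
  have hconst : (fun c : ℝ => u (c • x)) =ᶠ[𝓝 1] fun _ => u x :=
    (lt_mem_nhds zero_lt_one).mono hinv
  rw [real_inner_comm, inner_gradient_left]
  exact (hu'.comp_hasDerivAt 1 hray).unique ((hasDerivAt_const _ _).congr_of_eventuallyEq hconst)

/-- The extension `Φ(x) = φ(x/|x|)`, homogeneous of degree zero, of a function `φ` on the unit
sphere. -/
def homExt {E : Type*} [NormedAddCommGroup E] [NormedSpace ℝ E] (φ : E → ℝ) (x : E) : ℝ :=
  φ (‖x‖⁻¹ • x)

lemma homExt_smul {E : Type*} [NormedAddCommGroup E] [NormedSpace ℝ E] (φ : E → ℝ) {c : ℝ}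
    (hc : 0 < c) (x : E) : homExt φ (c • x) = homExt φ x := by
  unfold homExt
  rw [norm_smul, norm_of_nonneg hc.le, smul_smul, mul_inv, mul_right_comm, inv_mul_cancel₀ hc.ne',
    one_mul]

variable {N : ℕ} {Ω : Set (Euc N)} {φ : Euc N → ℝ} {l ρ : ℝ} {x : Euc N}

lemma lap_eq_laplacian (u : Euc N → ℝ) : lap N u = Δ u := by
  rw [laplacian_eq_iteratedFDeriv_orthonormalBasis u (EuclideanSpace.basisFun (Fin N) ℝ)]
  funext x
  simp only [lap, EuclideanSpace.basisFun_apply]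

lemma norm_rpow_neg_two (x : Euc N) : ‖x‖ ^ (-(2 : ℝ)) = (‖x‖ ^ 2)⁻¹ := by
  rw [rpow_neg (norm_nonneg x), rpow_two]

lemma norm_eq_one_of_mem_closure (hΩ : Ω ⊆ Metric.sphere 0 1) {ω : Euc N} (hω : ω ∈ closure Ω) :
    ‖ω‖ = 1 := by
  simpa using closure_minimal hΩ Metric.isClosed_sphere hω

lemma isOpen_cone (hΩ : IsConeDomain N Ω) : IsOpen (cone N Ω) := by
  obtain ⟨-, -, hopen⟩ := hΩ
  obtain ⟨O, hO, hOΩ⟩ := isOpen_induced_iff.1 hopen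
  have hcone : cone N Ω = {x : Euc N | x ≠ 0} ∩ (fun x => ‖x‖⁻¹ • x) ⁻¹' O := by
    ext x
    refine and_congr_right fun hx => ?_
    have hsphere : ‖x‖⁻¹ • x ∈ Metric.sphere (0 : Euc N) 1 := by
      simp [norm_smul, norm_ne_zero_iff.2 hx]
    exact (Set.ext_iff.1 hOΩ ⟨_, hsphere⟩).symm
  rw [hcone]
  refine ContinuousOn.isOpen_inter_preimage ?_ isOpen_ne hO
  exact (continuous_norm.continuousOn.inv₀ fun x hx => norm_ne_zero_iff.2 hx).smul continuousOn_id

lemma norm_pos_of_mem_coneGT (hρ : 0 < ρ) (hx : x ∈ coneGT N ρ Ω) : 0 < ‖x‖ :=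
  hρ.trans hx.1

lemma coneGT_subset_cone (hρ : 0 < ρ) : coneGT N ρ Ω ⊆ cone N Ω :=
  fun _ hx => ⟨norm_pos_iff.1 (norm_pos_of_mem_coneGT hρ hx), hx.2⟩

lemma isOpen_coneGT (hρ : 0 < ρ) (hΩ : IsConeDomain N Ω) : IsOpen (coneGT N ρ Ω) := by
  have hcone : coneGT N ρ Ω = cone N Ω ∩ {x | ρ < ‖x‖} :=
    Subset.antisymm (fun x hx => ⟨coneGT_subset_cone hρ hx, hx.1⟩) fun x hx => ⟨hx.2, hx.1.2⟩
  rw [hcone]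
  exact (isOpen_cone hΩ).inter (isOpen_lt continuous_const continuous_norm)

lemma smul_mem_coneGT {r : ℝ} {ω : Euc N} (hρ : 0 ≤ ρ) (hr : ρ < r) (hω : ω ∈ Ω)
    (hnorm : ‖ω‖ = 1) : r • ω ∈ coneGT N ρ Ω := by
  have hr0 : 0 < r := hρ.trans_lt hr
  have hrω : ‖r • ω‖ = r := by rw [norm_smul, hnorm, mul_one, norm_of_nonneg hr0.le]
  refine ⟨hrω.symm ▸ hr, ?_⟩
  rwa [hrω, smul_smul, inv_mul_cancel₀ hr0.ne', one_smul]

lemma continuousOn_log_norm_coneGT (hρ : 0 < ρ) :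
    ContinuousOn (fun x : Euc N => log ‖x‖) (coneGT N ρ Ω) :=
  continuous_norm.continuousOn.log fun _ hx => (norm_pos_of_mem_coneGT hρ hx).ne'

namespace DirichletEigenpair

variable (h : DirichletEigenpair N Ω l φ)
include h

lemma homExt_pos (hx : x ∈ cone N Ω) : 0 < homExt φ x := h.pos _ hx.2

lemma homExt_le_one (hx : x ∈ cone N Ω) : homExt φ x ≤ 1 := h.le_one _ (subset_closure hx.2)

lemma contDiffAt_homExt (hΩ : IsConeDomain N Ω) (hx : x ∈ cone N Ω) :
    ContDiffAt ℝ 2 (homExt φ) x :=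
  h.smoothExt.contDiffAt ((isOpen_cone hΩ).mem_nhds hx)

lemma continuousOn_homExt : ContinuousOn (homExt φ) (cone N Ω) := h.smoothExt.continuousOn

lemma laplacian_homExt (hx : x ∈ cone N Ω) :
    Δ (homExt φ) x = -l * (‖x‖ ^ 2)⁻¹ * homExt φ x := by
  have := h.eigen x hx
  rwa [lap_eq_laplacian, norm_rpow_neg_two] at this

end DirichletEigenpair

end ConeGeometry

section HardyOperator

variable {N : ℕ} {Ω : Set (Euc N)} {φ : Euc N → ℝ} {l μ ρ : ℝ} {x : Euc N} {f G : ℝ → ℝ}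

/-- The Hardy operator `-Δw - μ|x|⁻²w`. -/
def hardyOp (μ : ℝ) (w : Euc N → ℝ) (x : Euc N) : ℝ := -Δ w x - μ * (‖x‖ ^ 2)⁻¹ * w x

/-- The operator `f'' + (N - 2) f' - κ f`: in the variable `t = log |x|`, it is the radial part of
`|x|²` times the Hardy operator, up to sign, acting on functions `f(log |x|) Φ(x)`. -/
def cylOp (N : ℕ) (κ : ℝ) (f : ℝ → ℝ) (t : ℝ) : ℝ :=
  deriv (deriv f) t + ((N : ℝ) - 2) * deriv f t - κ * f t

lemma hardyOp_eq_lap (μ : ℝ) (w : Euc N → ℝ) (x : Euc N) :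
    hardyOp μ w x = -lap N w x - μ * ‖x‖ ^ (-(2 : ℝ)) * w x := by
  rw [hardyOp, lap_eq_laplacian, norm_rpow_neg_two]

lemma continuous_cylOp (hf : ContDiff ℝ 2 f) (κ : ℝ) : Continuous (cylOp N κ f) := by
  have hf' : ContDiff ℝ 1 (deriv f) := hf.deriv'
  exact ((hf'.continuous_deriv le_rfl).add (continuous_const.mul hf'.continuous)).sub
    (continuous_const.mul hf.continuous)

lemma hasCompactSupport_cylOp (hf : HasCompactSupport f) (κ : ℝ) :
    HasCompactSupport (cylOp N κ f) :=
  (hf.deriv.deriv.add hf.deriv.mul_left).sub hf.mul_left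

lemma laplacian_comp_log_norm_mul {u : Euc N → ℝ} (hf : ContDiff ℝ 2 f) (hx : x ≠ 0)
    (hu : ContDiffAt ℝ 2 u x) (hinv : ∀ c : ℝ, 0 < c → u (c • x) = u x) :
    Δ (fun y => f (log ‖y‖) * u y) x
      = (‖x‖ ^ 2)⁻¹ * cylOp N 0 f (log ‖x‖) * u x + f (log ‖x‖) * Δ u x := by
  have hflog : ContDiffAt ℝ 2 (fun y : Euc N => f (log ‖y‖)) x :=
    hf.contDiffAt.comp x (contDiffAt_log_norm hx)
  rw [laplacian_mul hflog hu, laplacian_comp_log_norm hf hx, gradient_comp_log_norm hf hx,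
    real_inner_smul_left,
    inner_gradient_eq_zero_of_smul_invariant (hu.differentiableAt two_ne_zero) hinv, cylOp]
  simp only [finrank_euclideanSpace, Fintype.card_fin]
  ring

lemma contDiffAt_separated (hΩ : IsConeDomain N Ω) (h : DirichletEigenpair N Ω l φ)
    (hf : ContDiff ℝ 2 f) (hG : ContDiff ℝ 2 G) (hx : x ∈ cone N Ω) :
    ContDiffAt ℝ 2 (fun y => f (log ‖y‖) * G (homExt φ y)) x :=
  (hf.contDiffAt.comp x (contDiffAt_log_norm hx.1)).mul
    (hG.contDiffAt.comp x (h.contDiffAt_homExt hΩ hx))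

lemma hardyOp_separated (hΩ : IsConeDomain N Ω) (h : DirichletEigenpair N Ω l φ)
    (hf : ContDiff ℝ 2 f) (hG : ContDiff ℝ 2 G) (hx : x ∈ cone N Ω) :
    hardyOp μ (fun y => f (log ‖y‖) * G (homExt φ y)) x
      = (‖x‖ ^ 2)⁻¹ * (l * f (log ‖x‖) * (deriv G (homExt φ x) * homExt φ x)
          - cylOp N (-μ) f (log ‖x‖) * G (homExt φ x))
        - f (log ‖x‖) * (deriv (deriv G) (homExt φ x) * ‖∇ (homExt φ) x‖ ^ 2) := by
  have hΦ := h.contDiffAt_homExt hΩ hx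
  have hlap := laplacian_comp_log_norm_mul (u := fun y => G (homExt φ y)) hf hx.1
    (hG.contDiffAt.comp x hΦ) fun c hc => congrArg G (homExt_smul φ hc x)
  rw [laplacian_comp hG.contDiffAt hΦ, h.laplacian_homExt hx] at hlap
  rw [hardyOp, hlap, cylOp, cylOp]
  ring

lemma hardyOp_log_norm_mul_homExt (hΩ : IsConeDomain N Ω) (h : DirichletEigenpair N Ω l φ)
    (hf : ContDiff ℝ 2 f) (hx : x ∈ cone N Ω) :
    hardyOp μ (fun y => f (log ‖y‖) * homExt φ y) x
      = -((‖x‖ ^ 2)⁻¹ * cylOp N (l - μ) f (log ‖x‖) * homExt φ x) := by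
  rw [hardyOp_separated (G := fun t => t) hΩ h hf contDiff_id hx]
  simp only [deriv_id'', deriv_const', cylOp]
  ring

/-- A positive `C²` supersolution of the Hardy operator in the truncated cone. Boundedness on
bounded subsets, rather than continuity up to the boundary, is what the integral estimates need. -/
structure IsPosSupersol (N : ℕ) (ρ μ : ℝ) (Ω : Set (Euc N)) (w : Euc N → ℝ) : Prop where
  contDiffOn : ContDiffOn ℝ 2 w (coneGT N ρ Ω)
  pos : ∀ x ∈ coneGT N ρ Ω, 0 < w x
  bddAbove : ∀ R : ℝ, BddAbove (w '' (coneGT N ρ Ω ∩ Metric.closedBall 0 R))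
  hardyOp_nonneg : ∀ x ∈ coneGT N ρ Ω, 0 ≤ hardyOp μ w x

namespace IsPosSupersol

variable {w : Euc N → ℝ} (hw : IsPosSupersol N ρ μ Ω w)
include hw

lemma contDiffAt (hρ : 0 < ρ) (hΩ : IsConeDomain N Ω) (hx : x ∈ coneGT N ρ Ω) :
    ContDiffAt ℝ 2 w x :=
  hw.contDiffOn.contDiffAt ((isOpen_coneGT hρ hΩ).mem_nhds hx)

lemma exists_le (R : ℝ) : ∃ B, 0 ≤ B ∧ ∀ x ∈ coneGT N ρ Ω, ‖x‖ ≤ R → w x ≤ B := by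
  obtain ⟨B, hB⟩ := hw.bddAbove R
  refine ⟨max B 0, le_max_right _ _, fun x hx hxR => le_max_of_le_left ?_⟩
  exact hB ⟨x, ⟨hx, mem_closedBall_zero_iff.2 hxR⟩, rfl⟩

lemma continuousOn_hardyOp (hρ : 0 < ρ) (hΩ : IsConeDomain N Ω) :
    ContinuousOn (hardyOp μ w) (coneGT N ρ Ω) := by
  intro x hx
  have hx0 := norm_pos_of_mem_coneGT hρ hx
  have hw2 := hw.contDiffAt hρ hΩ hx
  refine ContinuousAt.continuousWithinAt ?_
  exact (continuousAt_laplacian hw2).neg.sub ((continuousAt_const.mul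
    ((continuous_norm.pow 2).continuousAt.inv₀ (pow_ne_zero 2 hx0.ne'))).mul hw2.continuousAt)

end IsPosSupersol

end HardyOperator

section WeakInequality

lemma integrable_and_integral_le_of_tendsto {X ι : Type*} [MeasurableSpace X] {ν : Measure X}
    {L : Filter ι} [L.NeBot] [L.IsCountablyGenerated] {F : ι → X → ℝ} {g : X → ℝ} {c : ι → ℝ}
    {C : ℝ} (hF : ∀ i, Integrable (F i) ν) (hF0 : ∀ i, 0 ≤ᵐ[ν] F i)
    (hlim : ∀ᵐ x ∂ν, Tendsto (fun i => F i x) L (𝓝 (g x))) (hle : ∀ i, ∫ x, F i x ∂ν ≤ c i)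
    (hc : Tendsto c L (𝓝 C)) : Integrable g ν ∧ ∫ x, g x ∂ν ≤ C := by
  have hg : AEStronglyMeasurable g ν :=
    aestronglyMeasurable_of_tendsto_ae L (fun i => (hF i).aestronglyMeasurable) hlim
  obtain ⟨n, hn⟩ := L.exists_seq_tendsto
  have hg0 : 0 ≤ᵐ[ν] g := by
    filter_upwards [hlim, ae_all_iff.2 fun k => hF0 (n k)] with x hx hx0
    exact ge_of_tendsto' (hx.comp hn) hx0
  have hC : 0 ≤ C := ge_of_tendsto' hc fun i => (integral_nonneg_of_ae (hF0 i)).trans (hle i)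
  have hfatou : ∫⁻ x, ENNReal.ofReal (g x) ∂ν ≤ ENNReal.ofReal C :=
    calc ∫⁻ x, ENNReal.ofReal (g x) ∂ν
        = ∫⁻ x, liminf (fun i => ENNReal.ofReal (F i x)) L ∂ν :=
          lintegral_congr_ae (hlim.mono fun x hx => ((ENNReal.tendsto_ofReal hx).liminf_eq).symm)
      _ ≤ liminf (fun i => ∫⁻ x, ENNReal.ofReal (F i x) ∂ν) L :=
          lintegral_liminf_le' fun i => (hF i).aestronglyMeasurable.aemeasurable.ennreal_ofReal
      _ ≤ liminf (fun i => ENNReal.ofReal (c i)) L := by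
          refine liminf_le_liminf (Eventually.of_forall fun i => ?_)
          rw [← ofReal_integral_eq_lintegral_ofReal (hF i) (hF0 i)]
          exact ENNReal.ofReal_le_ofReal (hle i)
      _ = ENNReal.ofReal C := (ENNReal.tendsto_ofReal hc).liminf_eq
  refine ⟨⟨hg, ?_⟩, ?_⟩
  · rw [hasFiniteIntegral_iff_ofReal hg0]
    exact hfatou.trans_lt ENNReal.ofReal_lt_top
  · rw [integral_eq_lintegral_of_nonneg_ae hg0 hg]
    exact ENNReal.toReal_le_of_le_ofReal hC hfatou

variable {N : ℕ} {Ω : Set (Euc N)} {φ : Euc N → ℝ} {l μ ρ ε : ℝ} {x : Euc N} {f : ℝ → ℝ}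
  {w ψ : Euc N → ℝ}

lemma hardyOp_eq_zero_of_notMem_tsupport (hx : x ∉ tsupport ψ) : hardyOp μ ψ x = 0 := by
  rw [hardyOp, image_eq_zero_of_notMem_tsupport hx,
    image_eq_zero_of_notMem_tsupport fun h => hx (tsupport_laplacian_subset h)]
  ring

lemma integral_hardyOp_mul_comm (hψ : ContDiff ℝ 2 ψ) (hc : HasCompactSupport ψ)
    (h0 : (0 : Euc N) ∉ tsupport ψ) (hw : ∀ x ∈ tsupport ψ, ContDiffAt ℝ 2 w x) :
    Integrable (fun x => hardyOp μ w x * ψ x) ∧ Integrable (fun x => w x * hardyOp μ ψ x) ∧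
      ∫ x, hardyOp μ w x * ψ x = ∫ x, w x * hardyOp μ ψ x := by
  have hΔψ : Integrable (fun x => w x * Δ ψ x) := by
    simpa only [mul_comm] using integrable_mul_of_tsupport_subset hc.isCompact
      tsupport_laplacian_subset
      (continuous_iff_continuousAt.2 fun x => continuousAt_laplacian hψ.contDiffAt)
      fun x hx => (hw x hx).continuousAt
  have hΔw : Integrable (fun x => ψ x * Δ w x) :=
    integrable_mul_of_tsupport_subset hc.isCompact subset_rfl hψ.continuous
      fun x hx => continuousAt_laplacian (hw x hx)
  have hpot : Integrable (fun x => ψ x * (μ * (‖x‖ ^ 2)⁻¹ * w x)) := by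
    refine integrable_mul_of_tsupport_subset hc.isCompact subset_rfl hψ.continuous fun x hx => ?_
    have hx0 : ‖x‖ ≠ 0 := norm_ne_zero_iff.2 (ne_of_mem_of_not_mem hx h0)
    exact (continuousAt_const.mul ((continuous_norm.pow 2).continuousAt.inv₀
      (pow_ne_zero 2 hx0))).mul (hw x hx).continuousAt
  have hleft : (fun x => hardyOp μ w x * ψ x)
      = fun x => -(ψ x * Δ w x) - ψ x * (μ * (‖x‖ ^ 2)⁻¹ * w x) := by
    funext x
    rw [hardyOp]
    ring
  have hright : (fun x => w x * hardyOp μ ψ x)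
      = fun x => -(w x * Δ ψ x) - ψ x * (μ * (‖x‖ ^ 2)⁻¹ * w x) := by
    funext x
    rw [hardyOp]
    ring
  rw [hleft, hright]
  refine ⟨hΔw.neg.sub hpot, hΔψ.neg.sub hpot, ?_⟩
  rw [integral_sub hΔw.fun_neg hpot, integral_sub hΔψ.fun_neg hpot, integral_neg, integral_neg,
    integral_mul_laplacian_comm hψ hc hw]

/-- The test function `f(log |x|) Φ(x)` on the truncated cone, with `Φ` replaced by its smooth
truncation at level `ε` so that the support stays away from the lateral boundary. -/
def coneTest (ρ : ℝ) (Ω : Set (Euc N)) (φ : Euc N → ℝ) (f : ℝ → ℝ) (ε : ℝ) : Euc N → ℝ :=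
  (coneGT N ρ Ω).indicator fun x => f (log ‖x‖) * softTrunc ε (homExt φ x)

lemma exists_isCompact_support_coneTest_subset (hΩ : IsConeDomain N Ω)
    (h : DirichletEigenpair N Ω l φ) (hρ : 0 < ρ) (hfc : HasCompactSupport f)
    (hfρ : tsupport f ⊆ Ioi (log ρ)) (hε : 0 < ε) :
    ∃ K, IsCompact K ∧ Function.support (coneTest ρ Ω φ f ε) ⊆ K ∧ K ⊆ coneGT N ρ Ω := by
  have hsphere := fun ω hω => norm_eq_one_of_mem_closure hΩ.1 (ω := ω) hω
  have hclosure : IsCompact (closure Ω) :=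
    (isCompact_sphere (0 : Euc N) 1).of_isClosed_subset isClosed_closure
      (closure_minimal hΩ.1 Metric.isClosed_sphere)
  have hcap : IsCompact (closure Ω ∩ φ ⁻¹' Ici ε) := hclosure.of_isClosed_subset
    (h.contOn.preimage_isClosed_of_isClosed isClosed_closure isClosed_Ici) inter_subset_left
  refine ⟨(fun z : ℝ × Euc N => exp z.1 • z.2) '' (tsupport f ×ˢ (closure Ω ∩ φ ⁻¹' Ici ε)),
    (hfc.isCompact.prod hcap).image (by fun_prop), fun x hx => ?_, ?_⟩
  · have hxD : x ∈ coneGT N ρ Ω := by_contra fun hxD => hx (indicator_of_notMem hxD _)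
    have hx0 := norm_pos_of_mem_coneGT hρ hxD
    rw [Function.mem_support, coneTest, indicator_of_mem hxD] at hx
    have hφ : ε ≤ homExt φ x :=
      le_of_not_ge fun hlt => right_ne_zero_of_mul hx (softTrunc_eq_zero hε hlt)
    refine ⟨(log ‖x‖, ‖x‖⁻¹ • x),
      ⟨subset_tsupport f (left_ne_zero_of_mul hx), subset_closure hxD.2, hφ⟩, ?_⟩
    simp only [exp_log hx0, smul_smul, mul_inv_cancel₀ hx0.ne', one_smul]
  · rintro _ ⟨⟨t, ω⟩, ⟨ht, hω, hφ : ε ≤ φ ω⟩, rfl⟩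
    have hωΩ : ω ∈ Ω := by_contra fun hcon => by linarith [h.bdryZero ω ⟨hω, hcon⟩]
    exact smul_mem_coneGT hρ.le ((log_lt_iff_lt_exp hρ).1 (hfρ ht)) hωΩ (hsphere ω hω)

lemma hasCompactSupport_coneTest_and_tsupport_subset (hΩ : IsConeDomain N Ω)
    (h : DirichletEigenpair N Ω l φ) (hρ : 0 < ρ) (hfc : HasCompactSupport f)
    (hfρ : tsupport f ⊆ Ioi (log ρ)) (hε : 0 < ε) :
    HasCompactSupport (coneTest ρ Ω φ f ε) ∧ tsupport (coneTest ρ Ω φ f ε) ⊆ coneGT N ρ Ω := by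
  obtain ⟨K, hK, hsupp, hKD⟩ := exists_isCompact_support_coneTest_subset hΩ h hρ hfc hfρ hε
  have hts : tsupport (coneTest ρ Ω φ f ε) ⊆ K := closure_minimal hsupp hK.isClosed
  exact ⟨hK.of_isClosed_subset (isClosed_tsupport _) hts, hts.trans hKD⟩

lemma coneTest_eventuallyEq (hΩ : IsConeDomain N Ω) (hρ : 0 < ρ) (hx : x ∈ coneGT N ρ Ω) :
    coneTest ρ Ω φ f ε =ᶠ[𝓝 x] fun y => f (log ‖y‖) * softTrunc ε (homExt φ y) :=
  eventually_of_mem ((isOpen_coneGT hρ hΩ).mem_nhds hx) fun _ hy => indicator_of_mem hy _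

lemma contDiff_coneTest (hΩ : IsConeDomain N Ω) (h : DirichletEigenpair N Ω l φ) (hρ : 0 < ρ)
    (hf : ContDiff ℝ 2 f) (hts : tsupport (coneTest ρ Ω φ f ε) ⊆ coneGT N ρ Ω) :
    ContDiff ℝ 2 (coneTest ρ Ω φ f ε) := by
  refine contDiff_iff_contDiffAt.2 fun x => ?_
  by_cases hx : x ∈ tsupport (coneTest ρ Ω φ f ε)
  swap
  · exact contDiffAt_const.congr_of_eventuallyEq (notMem_tsupport_iff_eventuallyEq.1 hx)
  exact (contDiffAt_separated hΩ h hf (contDiff_softTrunc ε)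
    (coneGT_subset_cone hρ (hts hx))).congr_of_eventuallyEq (coneTest_eventuallyEq hΩ hρ (hts hx))

/-- The Hardy operator applied to `f(log |x|) G(Φ(x))`, without the term carrying `G''`, where
`a = G(Φ(x))` and `b = G'(Φ(x)) Φ(x)`. -/
def truncHardy (l μ : ℝ) (f : ℝ → ℝ) (a b : ℝ) (x : Euc N) : ℝ :=
  (‖x‖ ^ 2)⁻¹ * (l * f (log ‖x‖) * b - cylOp N (-μ) f (log ‖x‖) * a)

lemma truncHardy_self (a : ℝ) :
    truncHardy l μ f a a x = -((‖x‖ ^ 2)⁻¹ * cylOp N (l - μ) f (log ‖x‖) * a) := by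
  rw [truncHardy, cylOp, cylOp]
  ring

lemma hardyOp_coneTest_le (hΩ : IsConeDomain N Ω) (h : DirichletEigenpair N Ω l φ) (hρ : 0 < ρ)
    (hf : ContDiff ℝ 2 f) (hf0 : ∀ t, 0 ≤ f t) (hε : 0 < ε) (hx : x ∈ coneGT N ρ Ω) :
    hardyOp μ (coneTest ρ Ω φ f ε) x ≤ truncHardy l μ f (softTrunc ε (homExt φ x))
      (deriv (softTrunc ε) (homExt φ x) * homExt φ x) x := by
  have hloc := coneTest_eventuallyEq (φ := φ) (f := f) (ε := ε) hΩ hρ hx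
  have hsep := hardyOp_separated (μ := μ) hΩ h hf (contDiff_softTrunc ε)
    (coneGT_subset_cone hρ hx)
  have heq : hardyOp μ (coneTest ρ Ω φ f ε) x
      = hardyOp μ (fun y => f (log ‖y‖) * softTrunc ε (homExt φ y)) x := by
    rw [hardyOp, hardyOp, (laplacian_congr_nhds hloc).eq_of_nhds, hloc.eq_of_nhds]
  rw [heq, hsep, truncHardy]
  exact sub_le_self _ (mul_nonneg (hf0 _)
    (mul_nonneg (deriv_deriv_softTrunc_nonneg hε _) (sq_nonneg _)))

end WeakInequality

section WeakLimit

variable {N : ℕ} {Ω : Set (Euc N)} {φ : Euc N → ℝ} {l μ ρ ε : ℝ} {x : Euc N} {f : ℝ → ℝ}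
  {w : Euc N → ℝ}

lemma abs_truncHardy_le {a b : ℝ} (ha : a ∈ Icc (0 : ℝ) 1) (hb : b ∈ Icc (0 : ℝ) 1) (x : Euc N) :
    |truncHardy l μ f a b x|
      ≤ (‖x‖ ^ 2)⁻¹ * (|l * f (log ‖x‖)| + |cylOp N (-μ) f (log ‖x‖)|) := by
  rw [truncHardy, abs_mul, abs_of_nonneg (inv_nonneg.2 (sq_nonneg ‖x‖))]
  refine mul_le_mul_of_nonneg_left ((abs_sub _ _).trans (add_le_add ?_ ?_))
    (inv_nonneg.2 (sq_nonneg _))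
  · rw [abs_mul, abs_of_nonneg hb.1]
    exact mul_le_of_le_one_right (abs_nonneg _) hb.2
  · rw [abs_mul, abs_of_nonneg ha.1]
    exact mul_le_of_le_one_right (abs_nonneg _) ha.2

lemma continuousOn_inv_norm_sq_mul_comp_log (hρ : 0 < ρ) {a : ℝ → ℝ} (ha : Continuous a) :
    ContinuousOn (fun x : Euc N => (‖x‖ ^ 2)⁻¹ * a (log ‖x‖)) (coneGT N ρ Ω) :=
  ((continuous_norm.pow 2).continuousOn.inv₀ fun _ hx =>
    pow_ne_zero 2 (norm_pos_of_mem_coneGT hρ hx).ne').mul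
      (ha.comp_continuousOn (continuousOn_log_norm_coneGT hρ))

namespace DirichletEigenpair

variable (h : DirichletEigenpair N Ω l φ)
include h

lemma softTrunc_homExt_mem_Icc (hε : 0 < ε) (hx : x ∈ cone N Ω) :
    softTrunc ε (homExt φ x) ∈ Icc (0 : ℝ) 1 ∧
      deriv (softTrunc ε) (homExt φ x) * homExt φ x ∈ Icc (0 : ℝ) 1 := by
  have hΦ := h.homExt_pos hx
  have hΦ1 := h.homExt_le_one hx
  have hd := deriv_softTrunc_mem_Icc hε.ne' (homExt φ x)
  exact ⟨⟨softTrunc_nonneg hε.le _, (softTrunc_le hε hΦ.le).trans hΦ1⟩,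
    mul_nonneg hd.1 hΦ.le, mul_le_one₀ hd.2 hΦ.le hΦ1⟩

lemma continuousOn_softTrunc_homExt (hρ : 0 < ρ) (ε : ℝ) :
    ContinuousOn (fun x => softTrunc ε (homExt φ x)) (coneGT N ρ Ω) ∧
      ContinuousOn (fun x => deriv (softTrunc ε) (homExt φ x) * homExt φ x) (coneGT N ρ Ω) := by
  have hΦ := h.continuousOn_homExt.mono (coneGT_subset_cone (Ω := Ω) hρ)
  exact ⟨(contDiff_softTrunc ε).continuous.comp_continuousOn hΦ,
    (((contDiff_softTrunc ε).continuous_deriv one_le_two).comp_continuousOn hΦ).mul hΦ⟩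

end DirichletEigenpair

namespace IsPosSupersol

variable (hw : IsPosSupersol N ρ μ Ω w)
include hw

lemma integrableOn_mul_comp_log (hρ : 0 < ρ) (hΩ : IsConeDomain N Ω) {a : ℝ → ℝ}
    (ha : Continuous a) (hac : HasCompactSupport a) :
    IntegrableOn (fun x => w x * ((‖x‖ ^ 2)⁻¹ * a (log ‖x‖))) (coneGT N ρ Ω) := by
  have hD := (isOpen_coneGT hρ hΩ).measurableSet
  obtain ⟨M, hM⟩ := ha.bounded_above_of_compact_support hac
  obtain ⟨t₀, ht₀⟩ := hac.isCompact.bddAbove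
  obtain ⟨B, hB0, hB⟩ := hw.exists_le (exp t₀)
  have hcont := hw.contDiffOn.continuousOn.mul
    (continuousOn_inv_norm_sq_mul_comp_log (Ω := Ω) hρ ha)
  have hball : IntegrableOn (fun x => w x * ((‖x‖ ^ 2)⁻¹ * a (log ‖x‖)))
      (coneGT N ρ Ω ∩ Metric.closedBall 0 (exp t₀)) := by
    have hm := hD.inter (measurableSet_closedBall (x := (0 : Euc N)) (ε := exp t₀))
    refine .of_bound ((measure_mono inter_subset_right).trans_lt measure_closedBall_lt_top)
      ((hcont.mono inter_subset_left).aestronglyMeasurable hm) (B * ((ρ ^ 2)⁻¹ * M))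
      (ae_restrict_of_forall_mem hm fun x hx => ?_)
    have hρx : (‖x‖ ^ 2)⁻¹ ≤ (ρ ^ 2)⁻¹ :=
      inv_anti₀ (by positivity) (pow_le_pow_left₀ hρ.le hx.1.1.le 2)
    rw [norm_mul, norm_mul, norm_of_nonneg (hw.pos x hx.1).le, norm_of_nonneg (by positivity)]
    exact mul_le_mul (hB x hx.1 (mem_closedBall_zero_iff.1 hx.2))
      (mul_le_mul hρx (hM _) (norm_nonneg _) (by positivity)) (by positivity) hB0
  refine hball.of_forall_sdiff_eq_zero hD fun x hx => ?_
  have hx0 := norm_pos_of_mem_coneGT hρ hx.1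
  have hlog : log ‖x‖ ∉ tsupport a := fun hlog =>
    hx.2 ⟨hx.1, mem_closedBall_zero_iff.2 ((log_le_iff_le_exp hx0).1 (ht₀ hlog))⟩
  rw [image_eq_zero_of_notMem_tsupport hlog, mul_zero, mul_zero]

lemma integrableOn_truncHardy_bound (hρ : 0 < ρ) (hΩ : IsConeDomain N Ω) (hf : ContDiff ℝ 2 f)
    (hfc : HasCompactSupport f) (l : ℝ) :
    IntegrableOn (fun x => w x * ((‖x‖ ^ 2)⁻¹ *
      (|l * f (log ‖x‖)| + |cylOp N (-μ) f (log ‖x‖)|))) (coneGT N ρ Ω) :=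
  hw.integrableOn_mul_comp_log hρ hΩ
    ((continuous_const.mul hf.continuous).abs.add (continuous_cylOp hf _).abs)
    (hfc.mul_left.abs.add (hasCompactSupport_cylOp hfc _).abs)

lemma norm_mul_truncHardy_le {a b : ℝ} (ha : a ∈ Icc (0 : ℝ) 1) (hb : b ∈ Icc (0 : ℝ) 1)
    (hx : x ∈ coneGT N ρ Ω) : ‖w x * truncHardy l μ f a b x‖
      ≤ w x * ((‖x‖ ^ 2)⁻¹ * (|l * f (log ‖x‖)| + |cylOp N (-μ) f (log ‖x‖)|)) := by
  rw [norm_mul, norm_of_nonneg (hw.pos x hx).le]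
  exact mul_le_mul_of_nonneg_left (abs_truncHardy_le ha hb x) (hw.pos x hx).le

lemma integrableOn_mul_truncHardy (hρ : 0 < ρ) (hΩ : IsConeDomain N Ω) (hf : ContDiff ℝ 2 f)
    (hfc : HasCompactSupport f) {a b : Euc N → ℝ} (ha : ContinuousOn a (coneGT N ρ Ω))
    (hb : ContinuousOn b (coneGT N ρ Ω)) (hab : ∀ x ∈ coneGT N ρ Ω, a x ∈ Icc (0 : ℝ) 1 ∧
      b x ∈ Icc (0 : ℝ) 1) :
    IntegrableOn (fun x => w x * truncHardy l μ f (a x) (b x) x) (coneGT N ρ Ω) := by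
  have hD := (isOpen_coneGT hρ hΩ).measurableSet
  refine (hw.integrableOn_truncHardy_bound hρ hΩ hf hfc l).mono'
    (ContinuousOn.aestronglyMeasurable ?_ hD) ?_
  · have hlf := continuousOn_inv_norm_sq_mul_comp_log (Ω := Ω) hρ
      (a := fun t => l * f t) (continuous_const.mul hf.continuous)
    have hcyl := continuousOn_inv_norm_sq_mul_comp_log (Ω := Ω) hρ
      (continuous_cylOp (N := N) hf (-μ))
    refine hw.contDiffOn.continuousOn.mul (((hlf.mul hb).sub (hcyl.mul ha)).congr fun x _ => ?_)
    simp only [truncHardy, Pi.sub_apply, Pi.mul_apply, mul_sub, mul_assoc]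
  · exact ae_restrict_of_forall_mem hD fun x hx =>
      hw.norm_mul_truncHardy_le (hab x hx).1 (hab x hx).2 hx

lemma integral_hardyOp_mul_truncated_le (hρ : 0 < ρ) (hΩ : IsConeDomain N Ω)
    (h : DirichletEigenpair N Ω l φ) (hf : ContDiff ℝ 2 f) (hf0 : ∀ t, 0 ≤ f t)
    (hfc : HasCompactSupport f) (hfρ : tsupport f ⊆ Ioi (log ρ)) (hε : 0 < ε)
    (hint : IntegrableOn (fun x => w x * truncHardy l μ f (softTrunc ε (homExt φ x))
      (deriv (softTrunc ε) (homExt φ x) * homExt φ x) x) (coneGT N ρ Ω)) :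
    IntegrableOn (fun x => hardyOp μ w x * (f (log ‖x‖) * softTrunc ε (homExt φ x)))
        (coneGT N ρ Ω) ∧
      ∫ x in coneGT N ρ Ω, hardyOp μ w x * (f (log ‖x‖) * softTrunc ε (homExt φ x))
        ≤ ∫ x in coneGT N ρ Ω, w x * truncHardy l μ f (softTrunc ε (homExt φ x))
            (deriv (softTrunc ε) (homExt φ x) * homExt φ x) x := by
  have hD := (isOpen_coneGT hρ hΩ).measurableSet
  obtain ⟨hc, hts⟩ := hasCompactSupport_coneTest_and_tsupport_subset hΩ h hρ hfc hfρ hε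
  have h0 : (0 : Euc N) ∉ tsupport (coneTest ρ Ω φ f ε) := fun h0 =>
    (norm_pos_of_mem_coneGT hρ (hts h0)).ne' norm_zero
  obtain ⟨hi, hi', hcomm⟩ := integral_hardyOp_mul_comm (μ := μ) (contDiff_coneTest hΩ h hρ hf hts)
    hc h0 fun x hx => hw.contDiffAt hρ hΩ (hts hx)
  have heq : EqOn (fun x => hardyOp μ w x * coneTest ρ Ω φ f ε x)
      (fun x => hardyOp μ w x * (f (log ‖x‖) * softTrunc ε (homExt φ x))) (coneGT N ρ Ω) :=
    fun x hx => congrArg _ (indicator_of_mem hx _)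
  refine ⟨hi.integrableOn.congr_fun heq hD, ?_⟩
  calc ∫ x in coneGT N ρ Ω, hardyOp μ w x * (f (log ‖x‖) * softTrunc ε (homExt φ x))
      = ∫ x in coneGT N ρ Ω, hardyOp μ w x * coneTest ρ Ω φ f ε x :=
        (setIntegral_congr_fun hD heq).symm
    _ = ∫ x, w x * hardyOp μ (coneTest ρ Ω φ f ε) x := by
        rw [← hcomm]
        refine setIntegral_eq_integral_of_forall_compl_eq_zero fun x hx => ?_
        rw [image_eq_zero_of_notMem_tsupport fun h => hx (hts h), mul_zero]
    _ = ∫ x in coneGT N ρ Ω, w x * hardyOp μ (coneTest ρ Ω φ f ε) x := by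
        refine (setIntegral_eq_integral_of_forall_compl_eq_zero fun x hx => ?_).symm
        rw [hardyOp_eq_zero_of_notMem_tsupport fun h => hx (hts h), mul_zero]
    _ ≤ _ := setIntegral_mono_on hi'.integrableOn hint hD fun x hx =>
        mul_le_mul_of_nonneg_left (hardyOp_coneTest_le hΩ h hρ hf hf0 hε hx) (hw.pos x hx).le

theorem integral_hardyOp_mul_le (hρ : 0 < ρ) (hΩ : IsConeDomain N Ω)
    (h : DirichletEigenpair N Ω l φ) (hf : ContDiff ℝ 2 f) (hf0 : ∀ t, 0 ≤ f t)
    (hfc : HasCompactSupport f) (hfρ : tsupport f ⊆ Ioi (log ρ)) :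
    IntegrableOn (fun x => hardyOp μ w x * (f (log ‖x‖) * homExt φ x)) (coneGT N ρ Ω) ∧
      ∫ x in coneGT N ρ Ω, hardyOp μ w x * (f (log ‖x‖) * homExt φ x)
        ≤ -∫ x in coneGT N ρ Ω,
            w x * ((‖x‖ ^ 2)⁻¹ * cylOp N (l - μ) f (log ‖x‖) * homExt φ x) := by
  have hD := (isOpen_coneGT hρ hΩ).measurableSet
  have hcone := coneGT_subset_cone (Ω := Ω) hρ
  set ε : ℕ → ℝ := fun n => 1 / (n + 1)
  have hε : ∀ n, 0 < ε n := fun n => Nat.one_div_pos_of_nat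
  have hε0 : Tendsto ε atTop (𝓝[>] 0) := tendsto_nhdsWithin_iff.2
    ⟨tendsto_one_div_add_atTop_nhds_zero_nat, .of_forall hε⟩
  have hint := fun n => hw.integrableOn_mul_truncHardy (l := l) hρ hΩ hf hfc
    (h.continuousOn_softTrunc_homExt hρ (ε n)).1 (h.continuousOn_softTrunc_homExt hρ (ε n)).2
    fun x hx => h.softTrunc_homExt_mem_Icc (hε n) (hcone hx)
  have hle := fun n => hw.integral_hardyOp_mul_truncated_le hρ hΩ h hf hf0 hfc hfρ (hε n) (hint n)
  have hlim : Tendsto (fun n => ∫ x in coneGT N ρ Ω, w x * truncHardy l μ f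
      (softTrunc (ε n) (homExt φ x)) (deriv (softTrunc (ε n)) (homExt φ x) * homExt φ x) x) atTop
      (𝓝 (∫ x in coneGT N ρ Ω, w x * truncHardy l μ f (homExt φ x) (homExt φ x) x)) := by
    refine tendsto_integral_of_dominated_convergence _ (fun n => (hint n).aestronglyMeasurable)
      (hw.integrableOn_truncHardy_bound hρ hΩ hf hfc l) (fun n => ?_) ?_ <;>
    refine ae_restrict_of_forall_mem hD fun x hx => ?_
    · have hmem := h.softTrunc_homExt_mem_Icc (hε n) (hcone hx)
      exact hw.norm_mul_truncHardy_le hmem.1 hmem.2 hx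
    · have hΦ := h.homExt_pos (hcone hx)
      have hG := (tendsto_softTrunc hΦ.le).comp hε0
      have hG' := ((tendsto_deriv_softTrunc hΦ).comp hε0).mul_const (homExt φ x)
      rw [one_mul] at hG'
      exact (((hG'.const_mul _).sub (hG.const_mul _)).const_mul _).const_mul _
  simp only [truncHardy_self, mul_neg, integral_neg] at hlim
  refine integrable_and_integral_le_of_tendsto (fun n => (hle n).1) (fun n => ?_) ?_
    (fun n => (hle n).2) hlim
  · exact ae_restrict_of_forall_mem hD fun x hx => mul_nonneg (hw.hardyOp_nonneg x hx)
      (mul_nonneg (hf0 _) (softTrunc_nonneg (hε n).le _))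
  · refine ae_restrict_of_forall_mem hD fun x hx => ?_
    exact (((tendsto_softTrunc (h.homExt_pos (hcone hx)).le).comp hε0).const_mul _).const_mul _

end IsPosSupersol

end WeakLimit

section AnnulusMeasure

variable {N : ℕ} {Ω : Set (Euc N)} {φ : Euc N → ℝ} {l μ ρ T : ℝ} {x : Euc N} {g w : Euc N → ℝ}

/-- The logarithmic annulus `{x ∈ C_Ω^ρ : T ≤ log |x| < T + 1}`. -/
def logAnnulus (N : ℕ) (ρ : ℝ) (Ω : Set (Euc N)) (T : ℝ) : Set (Euc N) :=
  coneGT N ρ Ω ∩ (fun x => log ‖x‖) ⁻¹' Ico T (T + 1)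

/-- The measure `Φ dx` on the logarithmic annulus, `Φ` being the extension of `φ`. All solutions
are averaged against it. -/
def annulusMeasure (N : ℕ) (ρ : ℝ) (Ω : Set (Euc N)) (φ : Euc N → ℝ) (T : ℝ) :
    Measure (Euc N) :=
  (volume.restrict (logAnnulus N ρ Ω T)).withDensity fun x => ENNReal.ofReal (homExt φ x)

lemma logAnnulus_subset : logAnnulus N ρ Ω T ⊆ coneGT N ρ Ω := inter_subset_left

lemma measurableSet_logAnnulus (hρ : 0 < ρ) (hΩ : IsConeDomain N Ω) (T : ℝ) :
    MeasurableSet (logAnnulus N ρ Ω T) :=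
  (isOpen_coneGT hρ hΩ).measurableSet.inter
    ((measurable_log.comp measurable_norm) measurableSet_Ico)

lemma norm_le_exp_of_mem_logAnnulus (hρ : 0 < ρ) (hx : x ∈ logAnnulus N ρ Ω T) :
    ‖x‖ ≤ exp (T + 1) :=
  (log_le_iff_le_exp (norm_pos_of_mem_coneGT hρ hx.1)).1 hx.2.2.le

lemma volume_logAnnulus_le (hρ : 0 < ρ) (T : ℝ) :
    volume (logAnnulus N ρ Ω T)
      ≤ ENNReal.ofReal (exp (T + 1) ^ N) * volume (Metric.ball (0 : Euc N) 1) := by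
  refine (measure_mono fun x hx => ?_).trans_eq
    ((Measure.addHaar_closedBall volume (0 : Euc N) (exp_pos (T + 1)).le).trans ?_)
  · exact mem_closedBall_zero_iff.2 (norm_le_exp_of_mem_logAnnulus hρ hx)
  · rw [finrank_euclideanSpace, Fintype.card_fin]

lemma volume_logAnnulus_lt_top (hρ : 0 < ρ) (T : ℝ) : volume (logAnnulus N ρ Ω T) < ⊤ :=
  (volume_logAnnulus_le hρ T).trans_lt
    (ENNReal.mul_lt_top ENNReal.ofReal_lt_top measure_ball_lt_top)

lemma ae_annulusMeasure_of_forall_mem (hρ : 0 < ρ) (hΩ : IsConeDomain N Ω) {P : Euc N → Prop}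
    (hP : ∀ x ∈ logAnnulus N ρ Ω T, P x) : ∀ᵐ x ∂annulusMeasure N ρ Ω φ T, P x :=
  (withDensity_absolutelyContinuous _ _).ae_le
    (ae_restrict_of_forall_mem (measurableSet_logAnnulus hρ hΩ T) hP)

namespace DirichletEigenpair

variable (h : DirichletEigenpair N Ω l φ)
include h

lemma continuousOn_homExt_coneGT (hρ : 0 < ρ) : ContinuousOn (homExt φ) (coneGT N ρ Ω) :=
  h.continuousOn_homExt.mono (coneGT_subset_cone hρ)

lemma annulusMeasure_le (hρ : 0 < ρ) (hΩ : IsConeDomain N Ω) (T : ℝ) :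
    annulusMeasure N ρ Ω φ T ≤ volume.restrict (logAnnulus N ρ Ω T) := by
  refine (withDensity_mono ?_).trans_eq withDensity_one
  refine ae_restrict_of_forall_mem (measurableSet_logAnnulus hρ hΩ T) fun x hx => ?_
  exact ENNReal.ofReal_le_one.2 (h.homExt_le_one (coneGT_subset_cone hρ hx.1))

lemma isFiniteMeasure_annulusMeasure (hρ : 0 < ρ) (hΩ : IsConeDomain N Ω) (T : ℝ) :
    IsFiniteMeasure (annulusMeasure N ρ Ω φ T) :=
  ⟨(h.annulusMeasure_le hρ hΩ T univ).trans_lt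
    ((Measure.restrict_apply_univ _).trans_lt (volume_logAnnulus_lt_top hρ T))⟩

lemma aestronglyMeasurable_annulusMeasure (hρ : 0 < ρ) (hΩ : IsConeDomain N Ω)
    (hg : ContinuousOn g (coneGT N ρ Ω)) (T : ℝ) :
    AEStronglyMeasurable g (annulusMeasure N ρ Ω φ T) :=
  ((hg.mono logAnnulus_subset).aestronglyMeasurable (measurableSet_logAnnulus hρ hΩ T)).mono_measure
    (h.annulusMeasure_le hρ hΩ T)

lemma exists_measureReal_annulusMeasure_le (hρ : 0 < ρ) (hΩ : IsConeDomain N Ω) :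
    ∃ K, 0 < K ∧ ∀ T, (annulusMeasure N ρ Ω φ T).real univ ≤ K * exp (T * N) := by
  set b := (volume (Metric.ball (0 : Euc N) 1)).toReal
  have hb : 0 < b := ENNReal.toReal_pos (Metric.measure_ball_pos _ _ one_pos).ne'
    measure_ball_lt_top.ne
  have hball : volume (Metric.ball (0 : Euc N) 1) = ENNReal.ofReal b :=
    (ENNReal.ofReal_toReal measure_ball_lt_top.ne).symm
  refine ⟨exp N * b, by positivity, fun T => ENNReal.toReal_le_of_le_ofReal (by positivity) ?_⟩
  calc annulusMeasure N ρ Ω φ T univ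
      ≤ volume (logAnnulus N ρ Ω T) :=
        (h.annulusMeasure_le hρ hΩ T univ).trans_eq (Measure.restrict_apply_univ _)
    _ ≤ ENNReal.ofReal (exp (T + 1) ^ N) * volume (Metric.ball (0 : Euc N) 1) :=
        volume_logAnnulus_le hρ T
    _ = ENNReal.ofReal (exp N * b * exp (T * N)) := by
        rw [hball, ← ENNReal.ofReal_mul (by positivity), ← exp_nat_mul, mul_right_comm, ← exp_add]
        ring_nf

lemma integrable_annulusMeasure_of_continuousOn (hρ : 0 < ρ) (hΩ : IsConeDomain N Ω)
    (hg : ContinuousOn g (coneGT N ρ Ω)) {B : ℝ} (hB : ∀ x ∈ logAnnulus N ρ Ω T, ‖g x‖ ≤ B) :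
    Integrable g (annulusMeasure N ρ Ω φ T) :=
  have := h.isFiniteMeasure_annulusMeasure hρ hΩ T
  .of_bound (h.aestronglyMeasurable_annulusMeasure hρ hΩ hg T) B
    (ae_annulusMeasure_of_forall_mem hρ hΩ hB)

lemma aemeasurable_ofReal_homExt (hρ : 0 < ρ) (hΩ : IsConeDomain N Ω) (T : ℝ) :
    AEMeasurable (fun x => ENNReal.ofReal (homExt φ x))
      (volume.restrict (logAnnulus N ρ Ω T)) :=
  (((h.continuousOn_homExt_coneGT hρ).mono logAnnulus_subset).aemeasurable
    (measurableSet_logAnnulus hρ hΩ T)).ennreal_ofReal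

lemma integral_annulusMeasure (hρ : 0 < ρ) (hΩ : IsConeDomain N Ω) (g : Euc N → ℝ) :
    ∫ x, g x ∂annulusMeasure N ρ Ω φ T = ∫ x in logAnnulus N ρ Ω T, g x * homExt φ x := by
  rw [annulusMeasure, integral_withDensity_eq_integral_toReal_smul₀
    (h.aemeasurable_ofReal_homExt hρ hΩ T) (.of_forall fun _ => ENNReal.ofReal_lt_top)]
  refine setIntegral_congr_fun (measurableSet_logAnnulus hρ hΩ T) fun x hx => ?_
  rw [ENNReal.toReal_ofReal (h.homExt_pos (coneGT_subset_cone hρ hx.1)).le, smul_eq_mul, mul_comm]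

lemma integrable_annulusMeasure_iff (hρ : 0 < ρ) (hΩ : IsConeDomain N Ω) :
    Integrable g (annulusMeasure N ρ Ω φ T)
      ↔ IntegrableOn (fun x => g x * homExt φ x) (logAnnulus N ρ Ω T) := by
  rw [annulusMeasure, integrable_withDensity_iff_integrable_smul₀'
    (h.aemeasurable_ofReal_homExt hρ hΩ T) (.of_forall fun _ => ENNReal.ofReal_lt_top)]
  refine integrableOn_congr_fun (fun x hx => ?_) (measurableSet_logAnnulus hρ hΩ T)
  rw [ENNReal.toReal_ofReal (h.homExt_pos (coneGT_subset_cone hρ hx.1)).le, smul_eq_mul, mul_comm]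

end DirichletEigenpair

lemma IsPosSupersol.integrable_rpow_annulusMeasure (hw : IsPosSupersol N ρ μ Ω w) (hρ : 0 < ρ)
    (hΩ : IsConeDomain N Ω) (h : DirichletEigenpair N Ω l φ) {k : ℝ} (hk : 0 ≤ k) (T : ℝ) :
    Integrable (fun x => w x ^ k) (annulusMeasure N ρ Ω φ T) := by
  obtain ⟨B, -, hB⟩ := hw.exists_le (exp (T + 1))
  refine h.integrable_annulusMeasure_of_continuousOn (B := B ^ k) hρ hΩ
    (hw.contDiffOn.continuousOn.rpow_const fun x hx => .inl (hw.pos x hx).ne') fun x hx => ?_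
  have hwx := hw.pos x hx.1
  rw [norm_of_nonneg (rpow_nonneg hwx.le k)]
  exact rpow_le_rpow hwx.le (hB x hx.1 (norm_le_exp_of_mem_logAnnulus hρ hx)) hk

lemma IsPosSupersol.integrable_annulusMeasure (hw : IsPosSupersol N ρ μ Ω w) (hρ : 0 < ρ)
    (hΩ : IsConeDomain N Ω) (h : DirichletEigenpair N Ω l φ) (T : ℝ) :
    Integrable w (annulusMeasure N ρ Ω φ T) := by
  simpa only [rpow_one] using hw.integrable_rpow_annulusMeasure hρ hΩ h zero_le_one T

end AnnulusMeasure

section AnnulusEstimate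

variable {N : ℕ} {Ω : Set (Euc N)} {φ : Euc N → ℝ} {l μ ρ γ κ d t₁ T t : ℝ} {x : Euc N}
  {w : Euc N → ℝ}

/-- A nonpositive root `γ` of the indicial equation `γ(γ + N - 2) = κ` lying on the left of the
vertex of the parabola; for `κ = λ₁ - μ` this is the smaller root `γ_*`. -/
structure IsLowerExponent (N : ℕ) (κ γ : ℝ) : Prop where
  nonpos : γ ≤ 0
  root : γ * (γ + N - 2) = κ
  left_of_vertex : 2 * γ + N - 2 ≤ 0

lemma isLowerExponent_gammaStar (hN : 2 ≤ N) (hμ : μ ≤ CHconst N l) :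
    IsLowerExponent N (l - μ) (gammaStar N l μ) := by
  have hN' : (2 : ℝ) ≤ N := by exact_mod_cast hN
  have hdisc : 0 ≤ ((N : ℝ) - 2) ^ 2 + 4 * (l - μ) := by
    unfold CHconst at hμ
    linarith
  have hsq := sq_sqrt hdisc
  have hsqrt := sqrt_nonneg (((N : ℝ) - 2) ^ 2 + 4 * (l - μ))
  unfold gammaStar
  exact ⟨by linarith, by linarith, by linarith⟩

lemma cylOp_exp_mul_comp_sub {ζ : ℝ → ℝ} (hζ : ContDiff ℝ 2 ζ) (hγ : γ * (γ + N - 2) = κ)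
    (t₁ t : ℝ) :
    cylOp N κ (fun t => exp (γ * t) * ζ (t - t₁)) t
      = exp (γ * t) * (deriv (deriv ζ) (t - t₁) + (2 * γ + N - 2) * deriv ζ (t - t₁)) := by
  have hζ' : ContDiff ℝ 1 (deriv ζ) := hζ.deriv'
  have hexp (t : ℝ) : HasDerivAt (fun t => exp (γ * t)) (exp (γ * t) * γ) t := by
    simpa using ((hasDerivAt_id t).const_mul γ).exp
  have h₀ (t : ℝ) : HasDerivAt (fun t => ζ (t - t₁)) (deriv ζ (t - t₁)) t :=
    ((hζ.differentiable two_ne_zero).differentiableAt.hasDerivAt).comp_sub_const t t₁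
  have h₁ (t : ℝ) : HasDerivAt (fun t => deriv ζ (t - t₁)) (deriv (deriv ζ) (t - t₁)) t :=
    ((hζ'.differentiable one_ne_zero).differentiableAt.hasDerivAt).comp_sub_const t t₁
  have hderiv : deriv (fun t => exp (γ * t) * ζ (t - t₁))
      = fun t => exp (γ * t) * γ * ζ (t - t₁) + exp (γ * t) * deriv ζ (t - t₁) :=
    funext fun t => ((hexp t).fun_mul (h₀ t)).deriv
  have hderiv₂ := ((((hexp t).mul_const γ).fun_mul (h₀ t)).fun_add
    ((hexp t).fun_mul (h₁ t))).deriv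
  rw [cylOp, hderiv, hderiv₂, ← hγ]
  ring

/-- The radial profile of the test function `|x|^γ ζ(log |x| - t₁) Φ(x)`, where `ζ` is the bump
`rampBump d (T - t₁)`: it starts at `t₁` and peaks on `[T, T + 1)`. -/
def testProfile (γ d t₁ T t : ℝ) : ℝ := exp (γ * t) * rampBump d (T - t₁) (t - t₁)

/-- A nonnegative function supported in `[t₁, t₁ + 1]`, by which the profile `testProfile` is a
strict subsolution near `t₁`. -/
def sourceProfile (γ d t₁ t : ℝ) : ℝ :=
  exp (γ * t) * (exp (d * (t - t₁)) * deriv smoothTransition (t - t₁))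

lemma testProfile_nonneg : 0 ≤ testProfile γ d t₁ T t :=
  mul_nonneg (exp_pos _).le (rampBump_nonneg _ _ _)

lemma contDiff_testProfile : ContDiff ℝ 2 (testProfile γ d t₁ T) :=
  (contDiff_const.mul contDiff_id).exp.mul
    ((contDiff_rampBump d (T - t₁)).comp (contDiff_id.sub contDiff_const))

lemma tsupport_testProfile_subset (hT : t₁ + 1 ≤ T) :
    tsupport (testProfile γ d t₁ T) ⊆ Icc t₁ (t₁ + 2 * (T - t₁)) := by
  refine closure_minimal (fun t ht => ?_) isClosed_Icc
  have hmem := support_rampBump_subset (le_sub_iff_add_le'.2 hT) (right_ne_zero_of_mul ht)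
  exact ⟨by linarith [hmem.1], by linarith [hmem.2]⟩

lemma hasCompactSupport_testProfile (hT : t₁ + 1 ≤ T) :
    HasCompactSupport (testProfile γ d t₁ T) :=
  isCompact_Icc.of_isClosed_subset (isClosed_tsupport _) (tsupport_testProfile_subset hT)

lemma exp_le_testProfile (hγ : γ ≤ 0) (hd : 0 ≤ d) (hT : t₁ + 3 ≤ T) (ht : t ∈ Ico T (T + 1)) :
    exp (γ * (T + 1)) * (exp (-d) / 3 * exp (d * (T - t₁))) ≤ testProfile γ d t₁ T t := by
  have hexp : exp (γ * (T + 1)) ≤ exp (γ * t) :=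
    exp_le_exp.2 (mul_le_mul_of_nonpos_left ht.2.le hγ)
  refine mul_le_mul hexp (exp_le_rampBump hd (le_sub_iff_add_le'.2 hT) ?_) (by positivity)
    (exp_pos _).le
  exact ⟨sub_le_sub_right ht.1 _, by linarith [ht.2]⟩

lemma sourceProfile_nonneg : 0 ≤ sourceProfile γ d t₁ t :=
  mul_nonneg (exp_pos _).le (mul_nonneg (exp_pos _).le (deriv_smoothTransition_nonneg _))

lemma continuous_sourceProfile : Continuous (sourceProfile γ d t₁) := by
  have := contDiff_deriv_smoothTransition.continuous
  unfold sourceProfile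
  fun_prop

lemma hasCompactSupport_sourceProfile : HasCompactSupport (sourceProfile γ d t₁) := by
  refine .intro (isCompact_Icc (a := t₁) (b := t₁ + 1)) fun t ht => ?_
  have hout : t - t₁ ≤ 0 ∨ 1 ≤ t - t₁ := by
    by_contra! hin
    exact ht ⟨by linarith [hin.1], by linarith [hin.2]⟩
  rw [sourceProfile, deriv_smoothTransition_eq_zero hout, mul_zero, mul_zero]

lemma exists_sourceProfile_pos : ∃ t, t₁ < t ∧ 0 < sourceProfile γ d t₁ t := by
  obtain ⟨s, hs, hpos⟩ := exists_deriv_smoothTransition_pos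
  refine ⟨t₁ + s, by linarith [hs.1], ?_⟩
  rw [sourceProfile, add_sub_cancel_left]
  positivity

lemma exists_sourceProfile_sub_le_cylOp (hγ : IsLowerExponent N κ γ) :
    ∃ C, 0 < C ∧ ∀ t₁ T, t₁ + 2 ≤ T → ∀ t,
      sourceProfile γ (-(2 * γ + N - 2)) t₁ t - exp (γ * t) * (Ico T (T + 1)).indicator
          (fun _ => C * exp (-(2 * γ + N - 2) * (T - t₁))) t
        ≤ cylOp N κ (testProfile γ (-(2 * γ + N - 2)) t₁ T) t := by
  have hd : 0 ≤ -(2 * γ + N - 2) := neg_nonneg.2 hγ.left_of_vertex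
  obtain ⟨C, hC, hsuper⟩ := exists_rampBump_supersol hd
  refine ⟨C + 1, by positivity, fun t₁ T hT t => ?_⟩
  have hcyl := cylOp_exp_mul_comp_sub (contDiff_rampBump (-(2 * γ + N - 2)) (T - t₁))
    hγ.root t₁ t
  have hζ := hsuper (T - t₁) (le_sub_iff_add_le'.2 hT) (t - t₁)
  have hind : (Ico (T - t₁) (T - t₁ + 1)).indicator
        (fun _ => C * exp (-(2 * γ + N - 2) * (T - t₁))) (t - t₁)
      ≤ (Ico T (T + 1)).indicator
        (fun _ => (C + 1) * exp (-(2 * γ + N - 2) * (T - t₁))) t := by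
    have hmem : t - t₁ ∈ Ico (T - t₁) (T - t₁ + 1) ↔ t ∈ Ico T (T + 1) := by
      simp only [mem_Ico, sub_le_sub_iff_right, sub_add_eq_add_sub, sub_lt_sub_iff_right]
    simp only [indicator, hmem]
    split_ifs
    · gcongr
      linarith
    · rfl
  refine le_of_le_of_eq ?_ hcyl.symm
  rw [sourceProfile, ← mul_sub]
  refine mul_le_mul_of_nonneg_left ?_ (exp_pos _).le
  linarith

lemma inv_norm_sq_mul_exp_le (hγ : γ ≤ 0) (hρ : 0 < ρ) (hx : x ∈ logAnnulus N ρ Ω T) :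
    (‖x‖ ^ 2)⁻¹ * exp (γ * log ‖x‖) ≤ exp ((γ - 2) * T) := by
  rw [← norm_rpow_neg_two, rpow_def_of_pos (norm_pos_of_mem_coneGT hρ hx.1), ← exp_add]
  have := mul_le_mul_of_nonpos_left hx.2.1 (by linarith : γ - 2 ≤ 0)
  exact exp_le_exp.2 (by linarith)

lemma exists_sourceProfile_sub_indicator_le (hρ : 0 < ρ) (hγ : IsLowerExponent N κ γ) :
    ∃ C, 0 < C ∧ ∀ t₁ T, t₁ + 2 ≤ T → ∀ x ∈ coneGT N ρ Ω,
      (‖x‖ ^ 2)⁻¹ * sourceProfile γ (-(2 * γ + N - 2)) t₁ (log ‖x‖)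
          - (logAnnulus N ρ Ω T).indicator
            (fun _ => C * exp ((2 * γ + N - 2) * t₁) * exp (-(N + γ) * T)) x
        ≤ (‖x‖ ^ 2)⁻¹ * cylOp N κ (testProfile γ (-(2 * γ + N - 2)) t₁ T) (log ‖x‖) := by
  obtain ⟨C, hC, hcyl⟩ := exists_sourceProfile_sub_le_cylOp hγ
  refine ⟨C, hC, fun t₁ T hT x hx => ?_⟩
  refine le_trans ?_ (mul_le_mul_of_nonneg_left (hcyl t₁ T hT (log ‖x‖))
    (inv_nonneg.2 (sq_nonneg ‖x‖)))
  rw [mul_sub, ← mul_assoc _ (exp (γ * log ‖x‖))]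
  refine sub_le_sub_left ?_ _
  by_cases hlog : log ‖x‖ ∈ Ico T (T + 1)
  · have hxA : x ∈ logAnnulus N ρ Ω T := ⟨hx, hlog⟩
    rw [indicator_of_mem hlog, indicator_of_mem hxA]
    calc (‖x‖ ^ 2)⁻¹ * exp (γ * log ‖x‖) * (C * exp (-(2 * γ + N - 2) * (T - t₁)))
        ≤ exp ((γ - 2) * T) * (C * exp (-(2 * γ + N - 2) * (T - t₁))) :=
          mul_le_mul_of_nonneg_right (inv_norm_sq_mul_exp_le hγ.nonpos hρ hxA) (by positivity)
      _ = C * exp ((2 * γ + N - 2) * t₁) * exp (-(N + γ) * T) := by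
          rw [mul_left_comm, mul_assoc, ← exp_add, ← exp_add]
          ring_nf
  · rw [indicator_of_notMem hlog, indicator_of_notMem fun hxA => hlog hxA.2, mul_zero]

namespace IsPosSupersol

variable (hw : IsPosSupersol N ρ μ Ω w)
include hw

lemma integrableOn_mul_comp_log_mul_homExt (hρ : 0 < ρ) (hΩ : IsConeDomain N Ω)
    (h : DirichletEigenpair N Ω l φ) {a : ℝ → ℝ} (ha : Continuous a)
    (hac : HasCompactSupport a) :
    IntegrableOn (fun x => w x * ((‖x‖ ^ 2)⁻¹ * a (log ‖x‖) * homExt φ x)) (coneGT N ρ Ω) := by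
  have hD := (isOpen_coneGT hρ hΩ).measurableSet
  simp only [← mul_assoc (w _) (_ * _)]
  refine Integrable.mul_bdd (c := 1) (hw.integrableOn_mul_comp_log hρ hΩ ha hac)
    ((h.continuousOn_homExt_coneGT hρ).aestronglyMeasurable hD)
    (ae_restrict_of_forall_mem hD fun x hx => ?_)
  have hx' := coneGT_subset_cone hρ hx
  rw [norm_of_nonneg (h.homExt_pos hx').le]
  exact h.homExt_le_one hx'

lemma setIntegral_sourceProfile_pos (hρ : 0 < ρ) (hΩ : IsConeDomain N Ω)
    (h : DirichletEigenpair N Ω l φ) (ht₁ : log ρ < t₁) :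
    0 < ∫ x in coneGT N ρ Ω,
      w x * ((‖x‖ ^ 2)⁻¹ * sourceProfile γ d t₁ (log ‖x‖) * homExt φ x) := by
  have hD := isOpen_coneGT hρ hΩ
  have hnonneg : ∀ x ∈ coneGT N ρ Ω, 0 ≤ w x *
      ((‖x‖ ^ 2)⁻¹ * sourceProfile γ d t₁ (log ‖x‖) * homExt φ x) := fun x hx =>
    mul_nonneg (hw.pos x hx).le (mul_nonneg (mul_nonneg (by positivity) sourceProfile_nonneg)
      (h.homExt_pos (coneGT_subset_cone hρ hx)).le)
  rw [setIntegral_pos_iff_support_of_nonneg_ae (ae_restrict_of_forall_mem hD.measurableSet hnonneg)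
    (hw.integrableOn_mul_comp_log_mul_homExt hρ hΩ h continuous_sourceProfile
      hasCompactSupport_sourceProfile)]
  set S := coneGT N ρ Ω ∩ (fun x => log ‖x‖) ⁻¹' {t | 0 < sourceProfile γ d t₁ t}
  have hS : IsOpen S := (continuousOn_log_norm_coneGT hρ).isOpen_inter_preimage hD
    (isOpen_lt continuous_const continuous_sourceProfile)
  have hSne : S.Nonempty := by
    obtain ⟨ω, hω⟩ := hΩ.2.1.nonempty
    obtain ⟨t, ht, hpos⟩ := exists_sourceProfile_pos (γ := γ) (d := d) (t₁ := t₁)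
    have hω1 := norm_eq_one_of_mem_closure hΩ.1 (subset_closure hω)
    refine ⟨exp t • ω, smul_mem_coneGT hρ.le ((log_lt_iff_lt_exp hρ).1 (ht₁.trans ht)) hω hω1, ?_⟩
    simpa [norm_smul, hω1] using hpos
  refine (hS.measure_pos volume hSne).trans_le (measure_mono fun x hx => ⟨?_, hx.1⟩)
  have hx0 := norm_pos_of_mem_coneGT hρ hx.1
  exact (mul_pos (hw.pos x hx.1) (mul_pos (mul_pos (by positivity) hx.2)
    (h.homExt_pos (coneGT_subset_cone hρ hx.1)))).ne'

lemma exists_setIntegral_hardyOp_mul_testProfile_le (hρ : 0 < ρ) (hΩ : IsConeDomain N Ω)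
    (h : DirichletEigenpair N Ω l φ) (hγ : IsLowerExponent N (l - μ) γ) (ht₁ : log ρ < t₁) :
    ∃ c₀ C, 0 < c₀ ∧ 0 < C ∧ ∀ T, t₁ + 2 ≤ T →
      IntegrableOn (fun x => hardyOp μ w x *
        (testProfile γ (-(2 * γ + N - 2)) t₁ T (log ‖x‖) * homExt φ x)) (coneGT N ρ Ω) ∧
      ∫ x in coneGT N ρ Ω, hardyOp μ w x *
          (testProfile γ (-(2 * γ + N - 2)) t₁ T (log ‖x‖) * homExt φ x)
        ≤ C * exp (-(N + γ) * T) * ∫ x, w x ∂annulusMeasure N ρ Ω φ T - c₀ := by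
  set d := -(2 * γ + N - 2) with hd
  have hD := (isOpen_coneGT hρ hΩ).measurableSet
  obtain ⟨C, hC, hcyl⟩ := exists_sourceProfile_sub_indicator_le (Ω := Ω) hρ hγ
  refine ⟨_, C * exp ((2 * γ + N - 2) * t₁),
    hw.setIntegral_sourceProfile_pos (γ := γ) (d := d) hρ hΩ h ht₁, by positivity, fun T hT => ?_⟩
  have hA := measurableSet_logAnnulus hρ hΩ T
  have hsupp := (tsupport_testProfile_subset (γ := γ) (d := d) (by linarith : t₁ + 1 ≤ T)).trans
    fun t ht => ht₁.trans_le ht.1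
  have hfc := hasCompactSupport_testProfile (γ := γ) (d := d) (by linarith : t₁ + 1 ≤ T)
  obtain ⟨hint, hle⟩ := hw.integral_hardyOp_mul_le hρ hΩ h contDiff_testProfile
    (fun _ => testProfile_nonneg) hfc hsupp
  refine ⟨hint, hle.trans ?_⟩
  have hwint := (h.integrable_annulusMeasure_iff hρ hΩ).1 (hw.integrable_annulusMeasure hρ hΩ h T)
  have hind : IntegrableOn ((logAnnulus N ρ Ω T).indicator fun x =>
      C * exp ((2 * γ + N - 2) * t₁) * exp (-(N + γ) * T) * (w x * homExt φ x)) (coneGT N ρ Ω) :=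
    ((integrable_indicator_iff hA).2 (hwint.const_mul _)).integrableOn
  have hsrc := hw.integrableOn_mul_comp_log_mul_homExt hρ hΩ h
    (continuous_sourceProfile (γ := γ) (d := d) (t₁ := t₁)) hasCompactSupport_sourceProfile
  rw [h.integral_annulusMeasure hρ hΩ, ← integral_const_mul,
    ← inter_eq_self_of_subset_right (logAnnulus_subset (T := T)),
    ← setIntegral_indicator hA, ← integral_sub hind hsrc, ← integral_neg]
  refine setIntegral_mono_on (hw.integrableOn_mul_comp_log_mul_homExt hρ hΩ h
    (continuous_cylOp contDiff_testProfile _) (hasCompactSupport_cylOp hfc _)).neg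
    (hind.sub hsrc) hD fun x hx => ?_
  have hmul := mul_le_mul_of_nonneg_left (hcyl t₁ T hT x hx)
    (mul_nonneg (hw.pos x hx).le (h.homExt_pos (coneGT_subset_cone hρ hx)).le)
  rw [← hd] at hmul
  by_cases hxA : x ∈ logAnnulus N ρ Ω T
  · rw [indicator_of_mem hxA] at hmul ⊢
    linarith
  · rw [indicator_of_notMem hxA] at hmul ⊢
    linarith

lemma mul_integral_hardyOp_le (hρ : 0 < ρ) (hΩ : IsConeDomain N Ω)
    (h : DirichletEigenpair N Ω l φ) {f : ℝ → ℝ} {k : ℝ} (hk : 0 < k) (hf0 : ∀ t, 0 ≤ f t)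
    (hkf : ∀ t ∈ Ico T (T + 1), k ≤ f t)
    (hint : IntegrableOn (fun x => hardyOp μ w x * (f (log ‖x‖) * homExt φ x)) (coneGT N ρ Ω)) :
    Integrable (hardyOp μ w) (annulusMeasure N ρ Ω φ T) ∧
      k * ∫ x, hardyOp μ w x ∂annulusMeasure N ρ Ω φ T
        ≤ ∫ x in coneGT N ρ Ω, hardyOp μ w x * (f (log ‖x‖) * homExt φ x) := by
  have hD := (isOpen_coneGT hρ hΩ).measurableSet
  have hA := measurableSet_logAnnulus hρ hΩ T
  have hΦ : ∀ x ∈ coneGT N ρ Ω, 0 < homExt φ x := fun x hx =>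
    h.homExt_pos (coneGT_subset_cone hρ hx)
  have hle : ∀ x ∈ logAnnulus N ρ Ω T, k * (hardyOp μ w x * homExt φ x)
      ≤ hardyOp μ w x * (f (log ‖x‖) * homExt φ x) := fun x hx => by
    rw [mul_left_comm]
    exact mul_le_mul_of_nonneg_left (mul_le_mul_of_nonneg_right (hkf _ hx.2) (hΦ x hx.1).le)
      (hw.hardyOp_nonneg x hx.1)
  have hintA : IntegrableOn (fun x => k * (hardyOp μ w x * homExt φ x)) (logAnnulus N ρ Ω T) := by
    refine (hint.mono_set logAnnulus_subset).mono' (ContinuousOn.aestronglyMeasurable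
      (((hw.continuousOn_hardyOp hρ hΩ).mul (h.continuousOn_homExt_coneGT hρ)).mono
        logAnnulus_subset) hA |>.const_mul k) (ae_restrict_of_forall_mem hA fun x hx => ?_)
    rw [norm_of_nonneg (mul_nonneg hk.le
      (mul_nonneg (hw.hardyOp_nonneg x hx.1) (hΦ x hx.1).le))]
    exact hle x hx
  refine ⟨(h.integrable_annulusMeasure_iff hρ hΩ).2
    ((integrable_const_mul_iff hk.ne'.isUnit _).1 hintA), ?_⟩
  rw [h.integral_annulusMeasure hρ hΩ, ← integral_const_mul]
  refine (setIntegral_mono_on hintA (hint.mono_set logAnnulus_subset) hA hle).trans ?_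
  refine setIntegral_mono_set hint (ae_restrict_of_forall_mem hD fun x hx => ?_)
    logAnnulus_subset.eventuallyLE
  exact mul_nonneg (hw.hardyOp_nonneg x hx) (mul_nonneg (hf0 _) (hΦ x hx).le)

theorem exists_annulus_bounds (hρ : 0 < ρ) (hΩ : IsConeDomain N Ω)
    (h : DirichletEigenpair N Ω l φ) (hγ : IsLowerExponent N (l - μ) γ) :
    ∃ c C T₀, 0 < c ∧ 0 < C ∧ ∀ T, T₀ ≤ T →
      c * exp ((N + γ) * T) ≤ ∫ x, w x ∂annulusMeasure N ρ Ω φ T ∧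
      Integrable (hardyOp μ w) (annulusMeasure N ρ Ω φ T) ∧
      ∫ x, hardyOp μ w x ∂annulusMeasure N ρ Ω φ T
        ≤ C * exp (-2 * T) * ∫ x, w x ∂annulusMeasure N ρ Ω φ T := by
  have hd : 0 ≤ -(2 * γ + N - 2) := neg_nonneg.2 hγ.left_of_vertex
  set d := -(2 * γ + N - 2)
  set t₁ := log ρ + 1
  obtain ⟨c₀, C, hc₀, hC, htest⟩ := hw.exists_setIntegral_hardyOp_mul_testProfile_le hρ hΩ h hγ
    (lt_add_one (log ρ))
  refine ⟨c₀ / C, C * (3 * exp (d - γ + d * t₁)), t₁ + 3, by positivity, by positivity,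
    fun T hT => ?_⟩
  set k := exp (γ * (T + 1)) * (exp (-d) / 3 * exp (d * (T - t₁))) with hk
  have hk0 : 0 < k := by positivity
  obtain ⟨hint, hle⟩ := htest T (by linarith)
  obtain ⟨hHint, hHle⟩ := hw.mul_integral_hardyOp_le hρ hΩ h hk0 (fun _ => testProfile_nonneg)
    (fun t ht => exp_le_testProfile hγ.nonpos hd hT ht) hint
  have hH0 : 0 ≤ ∫ x, hardyOp μ w x ∂annulusMeasure N ρ Ω φ T :=
    integral_nonneg_of_ae (ae_annulusMeasure_of_forall_mem hρ hΩ fun x hx =>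
      hw.hardyOp_nonneg x hx.1)
  refine ⟨?_, hHint, ?_⟩
  · have hc₀le : c₀ ≤ C * exp (-(N + γ) * T) * ∫ x, w x ∂annulusMeasure N ρ Ω φ T := by
      linarith [mul_nonneg hk0.le hH0]
    rw [neg_mul, exp_neg] at hc₀le
    rw [div_mul_eq_mul_div, div_le_iff₀ hC]
    calc c₀ * exp ((N + γ) * T) ≤ _ := mul_le_mul_of_nonneg_right hc₀le (exp_pos _).le
      _ = (∫ x, w x ∂annulusMeasure N ρ Ω φ T) * C := by field_simp
  · have hkC : k * (C * (3 * exp (d - γ + d * t₁)) * exp (-2 * T)) = C * exp (-(N + γ) * T) := by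
      have hexp : -(N + γ) * T
          = γ * (T + 1) + -d + d * (T - t₁) + (d - γ + d * t₁) + -2 * T := by
        ring
      rw [hk, hexp]
      simp only [exp_add]
      ring
    refine le_of_mul_le_mul_left ?_ hk0
    rw [← mul_assoc, hkC]
    linarith

end IsPosSupersol

end AnnulusEstimate

section Jensen

variable {X : Type*} [MeasurableSpace X] {ν : Measure X} {f g : X → ℝ} {p q k : ℝ}

lemma rpow_integral_le [IsFiniteMeasure ν] (hk : 1 ≤ k) (hf₀ : 0 ≤ᵐ[ν] f) (hf : Integrable f ν)
    (hfk : Integrable (fun x => f x ^ k) ν) :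
    (∫ x, f x ∂ν) ^ k ≤ (∫ x, f x ^ k ∂ν) * ν.real univ ^ (k - 1) := by
  rcases eq_zero_or_neZero ν with rfl | _
  · simp [zero_rpow (zero_lt_one.trans_le hk).ne']
  have hm : 0 < ν.real univ := measureReal_univ_pos
  have hJensen := (convexOn_rpow hk).map_average_le
    (continuousOn_id.rpow_const fun _ _ => .inr (zero_le_one.trans hk)) isClosed_Ici hf₀ hf hfk
  simp only [average_eq, smul_eq_mul] at hJensen
  rw [mul_rpow (inv_nonneg.2 hm.le) (integral_nonneg_of_ae hf₀), inv_rpow hm.le,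
    inv_mul_le_iff₀ (rpow_pos_of_pos hm k)] at hJensen
  rw [rpow_sub_one hm.ne']
  exact hJensen.trans_eq (by ring)

lemma sq_integral_mul_le (hf : MemLp f 2 ν) (hg : MemLp g 2 ν) :
    (∫ x, f x * g x ∂ν) ^ 2 ≤ (∫ x, f x ^ 2 ∂ν) * ∫ x, g x ^ 2 ∂ν := by
  have hHölder := integral_mul_norm_le_Lp_mul_Lq HolderConjugate.two_two
    (by simpa using hf) (by simpa using hg)
  simp only [rpow_two, norm_eq_abs, sq_abs, ← abs_mul, ← sqrt_eq_rpow] at hHölder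
  rw [← sqrt_mul (integral_nonneg fun x => sq_nonneg (f x))] at hHölder
  exact (Real.sqrt_le_sqrt_iff (by positivity)).1
    ((sqrt_sq_eq_abs _).trans_le (abs_integral_le_integral_abs.trans hHölder))

-- Jensen with exponent `(p + q) / 2 ≥ 1`, then Cauchy–Schwarz on `f ^ (p / 2) * f ^ (q / 2)`.
lemma rpow_add_integral_le [IsFiniteMeasure ν] (hp : 0 < p) (hq : 0 < q) (hpq : 2 ≤ p + q)
    (hf₀ : 0 ≤ᵐ[ν] f) (hf : Integrable f ν) (hfp : Integrable (fun x => f x ^ p) ν)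
    (hfq : Integrable (fun x => f x ^ q) ν) :
    (∫ x, f x ∂ν) ^ (p + q)
      ≤ (∫ x, f x ^ p ∂ν) * (∫ x, f x ^ q ∂ν) * ν.real univ ^ (p + q - 2) := by
  have half_sq (r : ℝ) : (fun x => (f x ^ (r / 2)) ^ 2) =ᵐ[ν] fun x => f x ^ r := by
    filter_upwards [hf₀] with x hx
    rw [← rpow_mul_natCast hx, Nat.cast_two, div_mul_cancel₀ r two_ne_zero]
  have memLp (r : ℝ) (hr : Integrable (fun x => f x ^ r) ν) : MemLp (fun x => f x ^ (r / 2)) 2 ν :=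
    (memLp_two_iff_integrable_sq (hf.aemeasurable.pow_const _).aestronglyMeasurable).2
      (hr.congr (half_sq r).symm)
  have split : (fun x => f x ^ (p / 2) * f x ^ (q / 2)) =ᵐ[ν] fun x => f x ^ ((p + q) / 2) := by
    filter_upwards [hf₀] with x hx
    rw [← rpow_add_of_nonneg hx (by linarith) (by linarith), add_div]
  have hJensen := rpow_integral_le (k := (p + q) / 2) (by linarith) hf₀ hf
    (((memLp p hfp).integrable_mul (memLp q hfq)).congr split)
  have hCS := sq_integral_mul_le (memLp p hfp) (memLp q hfq)
  rw [integral_congr_ae split, integral_congr_ae (half_sq p), integral_congr_ae (half_sq q)] at hCS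
  have hI := integral_nonneg_of_ae hf₀
  calc (∫ x, f x ∂ν) ^ (p + q) = ((∫ x, f x ∂ν) ^ ((p + q) / 2)) ^ 2 := by
        rw [← rpow_mul_natCast hI, Nat.cast_two, div_mul_cancel₀ _ two_ne_zero]
    _ ≤ ((∫ x, f x ^ ((p + q) / 2) ∂ν) * ν.real univ ^ ((p + q) / 2 - 1)) ^ 2 := by gcongr
    _ = (∫ x, f x ^ ((p + q) / 2) ∂ν) ^ 2 * ν.real univ ^ (p + q - 2) := by
        rw [mul_pow, ← rpow_mul_natCast measureReal_nonneg]
        ring_nf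
    _ ≤ _ := by gcongr

end Jensen

section PowerMeans

variable {N : ℕ} {Ω : Set (Euc N)} {φ : Euc N → ℝ} {l μ ρ γ p q M T : ℝ} {v w : Euc N → ℝ}

lemma IsPosSupersol.rpow_mul_rpow (hv : IsPosSupersol N ρ μ Ω v) (hw : IsPosSupersol N ρ μ Ω w)
    (hρ : 0 < ρ) (hΩ : IsConeDomain N Ω) {a b : ℝ} (ha : 0 ≤ a) (hb : 0 ≤ b) (hab : a + b = 1) :
    IsPosSupersol N ρ μ Ω fun x => v x ^ a * w x ^ b where
  contDiffOn := (hv.contDiffOn.rpow_const_of_ne fun x hx => (hv.pos x hx).ne').mul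
    (hw.contDiffOn.rpow_const_of_ne fun x hx => (hw.pos x hx).ne')
  pos x hx := mul_pos (rpow_pos_of_pos (hv.pos x hx) a) (rpow_pos_of_pos (hw.pos x hx) b)
  bddAbove R := by
    obtain ⟨A, hA, hvA⟩ := hv.exists_le R
    obtain ⟨B, -, hwB⟩ := hw.exists_le R
    refine ⟨A ^ a * B ^ b, ?_⟩
    rintro - ⟨x, ⟨hx, hxR⟩, rfl⟩
    have hvx := hv.pos x hx
    have hwx := hw.pos x hx
    have hvA := hvA x hx (mem_closedBall_zero_iff.1 hxR)
    have hwB := hwB x hx (mem_closedBall_zero_iff.1 hxR)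
    dsimp only
    gcongr
  hardyOp_nonneg x hx := by
    have hvx := hv.hardyOp_nonneg x hx
    have hwx := hw.hardyOp_nonneg x hx
    have hΔ := laplacian_rpow_mul_rpow_le (K := μ * (‖x‖ ^ 2)⁻¹) (hv.contDiffAt hρ hΩ hx)
      (hw.contDiffAt hρ hΩ hx) (hv.pos x hx) (hw.pos x hx) ha hb hab
      (by rw [hardyOp] at hvx; linarith) (by rw [hardyOp] at hwx; linarith)
    rw [hardyOp]
    linarith

lemma exp_log_norm_mul_homExt_le (h : DirichletEigenpair N Ω l φ) (hρ : 0 < ρ) (hγ : γ ≤ 0)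
    {T : ℝ} {x : Euc N} (hx : x ∈ coneGT N ρ Ω) (hT : T ≤ log ‖x‖) :
    exp (γ * log ‖x‖) * homExt φ x ≤ exp (γ * T) := by
  have hΦ := h.homExt_le_one (coneGT_subset_cone hρ hx)
  refine (mul_le_of_le_one_right (exp_pos _).le hΦ).trans (exp_le_exp.2 ?_)
  exact mul_le_mul_of_nonpos_left hT hγ

lemma DirichletEigenpair.isPosSupersol (h : DirichletEigenpair N Ω l φ) (hρ : 0 < ρ)
    (hΩ : IsConeDomain N Ω) (hγ : γ ≤ 0) (hroot : γ * (γ + N - 2) = l - μ) :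
    IsPosSupersol N ρ μ Ω fun x => exp (γ * log ‖x‖) * homExt φ x where
  contDiffOn x hx := (contDiffAt_separated (f := fun t => exp (γ * t)) (G := fun t => t) hΩ h
    (by fun_prop) contDiff_id (coneGT_subset_cone hρ hx)).contDiffWithinAt
  pos x hx := mul_pos (exp_pos _) (h.homExt_pos (coneGT_subset_cone hρ hx))
  bddAbove _ := by
    refine ⟨exp (γ * log ρ), ?_⟩
    rintro - ⟨x, ⟨hx, -⟩, rfl⟩
    exact exp_log_norm_mul_homExt_le h hρ hγ hx (log_le_log hρ hx.1.le)
  hardyOp_nonneg x hx := by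
    have hcyl := cylOp_exp_mul_comp_sub (ζ := fun _ => 1) contDiff_const hroot 0 (log ‖x‖)
    simp only [mul_one, deriv_const', mul_zero, add_zero] at hcyl
    rw [hardyOp_log_norm_mul_homExt (f := fun t => exp (γ * t)) hΩ h (by fun_prop)
      (coneGT_subset_cone hρ hx), hcyl, mul_zero, zero_mul, neg_zero]

namespace IsPosSupersol

variable (hv : IsPosSupersol N ρ μ Ω v)
include hv

lemma ae_nonneg_annulusMeasure (hρ : 0 < ρ) (hΩ : IsConeDomain N Ω) (T : ℝ) :
    0 ≤ᵐ[annulusMeasure N ρ Ω φ T] v :=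
  ae_annulusMeasure_of_forall_mem hρ hΩ fun x hx => (hv.pos x hx.1).le

lemma integral_rpow_nonneg (hρ : 0 < ρ) (hΩ : IsConeDomain N Ω) (r : ℝ) :
    0 ≤ ∫ x, v x ^ r ∂annulusMeasure N ρ Ω φ T :=
  integral_nonneg_of_ae ((hv.ae_nonneg_annulusMeasure hρ hΩ T).mono fun _ hx => rpow_nonneg hx r)

lemma rpow_integral_annulusMeasure_le (hρ : 0 < ρ) (hΩ : IsConeDomain N Ω)
    (h : DirichletEigenpair N Ω l φ) (hp : 1 ≤ p) (hM : (annulusMeasure N ρ Ω φ T).real univ ≤ M) :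
    (∫ x, v x ∂annulusMeasure N ρ Ω φ T) ^ p
      ≤ (∫ x, v x ^ p ∂annulusMeasure N ρ Ω φ T) * M ^ (p - 1) := by
  have := h.isFiniteMeasure_annulusMeasure hρ hΩ T
  refine (rpow_integral_le hp (hv.ae_nonneg_annulusMeasure hρ hΩ T)
    (hv.integrable_annulusMeasure hρ hΩ h T)
    (hv.integrable_rpow_annulusMeasure hρ hΩ h (zero_le_one.trans hp) T)).trans ?_
  exact mul_le_mul_of_nonneg_left (rpow_le_rpow measureReal_nonneg hM (by linarith))
    (hv.integral_rpow_nonneg hρ hΩ p)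

lemma rpow_add_integral_annulusMeasure_le (hρ : 0 < ρ) (hΩ : IsConeDomain N Ω)
    (h : DirichletEigenpair N Ω l φ) (hp : 0 < p) (hq : 0 < q) (hpq : 2 ≤ p + q)
    (hM : (annulusMeasure N ρ Ω φ T).real univ ≤ M) :
    (∫ x, v x ∂annulusMeasure N ρ Ω φ T) ^ (p + q)
      ≤ (∫ x, v x ^ p ∂annulusMeasure N ρ Ω φ T) * (∫ x, v x ^ q ∂annulusMeasure N ρ Ω φ T)
        * M ^ (p + q - 2) := by
  have := h.isFiniteMeasure_annulusMeasure hρ hΩ T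
  refine (rpow_add_integral_le hp hq hpq (hv.ae_nonneg_annulusMeasure hρ hΩ T)
    (hv.integrable_annulusMeasure hρ hΩ h T)
    (hv.integrable_rpow_annulusMeasure hρ hΩ h hp.le T)
    (hv.integrable_rpow_annulusMeasure hρ hΩ h hq.le T)).trans ?_
  exact mul_le_mul_of_nonneg_left (rpow_le_rpow measureReal_nonneg hM (by linarith))
    (mul_nonneg (hv.integral_rpow_nonneg hρ hΩ p) (hv.integral_rpow_nonneg hρ hΩ q))

-- The geometric mean of `v` with the ground state `|x| ^ γ * Φ` is again a supersolution.
lemma exists_le_integral_rpow_of_le_one (hρ : 0 < ρ) (hΩ : IsConeDomain N Ω)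
    (h : DirichletEigenpair N Ω l φ) (hγ : IsLowerExponent N (l - μ) γ) (hp : 0 ≤ p)
    (hp₁ : p ≤ 1) :
    ∃ c T₀, 0 < c ∧ ∀ T, T₀ ≤ T →
      c * exp ((N + p * γ) * T) ≤ ∫ x, v x ^ p ∂annulusMeasure N ρ Ω φ T := by
  have hH := h.isPosSupersol hρ hΩ hγ.nonpos hγ.root
  have hw := hH.rpow_mul_rpow hv hρ hΩ (sub_nonneg.2 hp₁) hp (sub_add_cancel 1 p)
  obtain ⟨c, _, T₀, hc, _, hbound⟩ := hw.exists_annulus_bounds hρ hΩ h hγ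
  refine ⟨c, T₀, hc, fun T hT => ?_⟩
  have hE : 0 < exp (γ * T) ^ (1 - p) := rpow_pos_of_pos (exp_pos _) _
  refine le_of_mul_le_mul_left ?_ hE
  calc exp (γ * T) ^ (1 - p) * (c * exp ((N + p * γ) * T))
      = c * exp ((N + γ) * T) := by
        rw [← exp_mul, mul_left_comm, ← exp_add]
        ring_nf
    _ ≤ _ := (hbound T hT).1
    _ ≤ ∫ x, exp (γ * T) ^ (1 - p) * v x ^ p ∂annulusMeasure N ρ Ω φ T := by
        refine integral_mono_ae (hw.integrable_annulusMeasure hρ hΩ h T)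
          ((hv.integrable_rpow_annulusMeasure hρ hΩ h hp T).const_mul _)
          (ae_annulusMeasure_of_forall_mem hρ hΩ fun x hx => ?_)
        have hHx := hH.pos x hx.1
        have hvx := hv.pos x hx.1
        have hHT := exp_log_norm_mul_homExt_le h hρ hγ.nonpos hx.1 hx.2.1
        have := sub_nonneg.2 hp₁
        dsimp only
        gcongr
    _ = exp (γ * T) ^ (1 - p) * ∫ x, v x ^ p ∂annulusMeasure N ρ Ω φ T :=
        integral_const_mul _ _

lemma exists_le_integral_rpow_of_one_le (hρ : 0 < ρ) (hΩ : IsConeDomain N Ω)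
    (h : DirichletEigenpair N Ω l φ) (hγ : IsLowerExponent N (l - μ) γ) (hp : 1 ≤ p) :
    ∃ c T₀, 0 < c ∧ ∀ T, T₀ ≤ T →
      c * exp ((N + p * γ) * T) ≤ ∫ x, v x ^ p ∂annulusMeasure N ρ Ω φ T := by
  obtain ⟨c, _, T₀, hc, _, hbound⟩ := hv.exists_annulus_bounds hρ hΩ h hγ
  obtain ⟨K, hK, hmass⟩ := h.exists_measureReal_annulusMeasure_le hρ hΩ
  refine ⟨c ^ p / K ^ (p - 1), T₀, by positivity, fun T hT => ?_⟩
  refine le_of_mul_le_mul_right ?_ (rpow_pos_of_pos (mul_pos hK (exp_pos (T * N))) (p - 1))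
  calc c ^ p / K ^ (p - 1) * exp ((N + p * γ) * T) * (K * exp (T * N)) ^ (p - 1)
      = (c * exp ((N + γ) * T)) ^ p := by
        have hexp : exp ((N + γ) * T) ^ p
            = exp ((N + p * γ) * T) * exp (T * N) ^ (p - 1) := by
          rw [← exp_mul, ← exp_mul, ← exp_add]
          ring_nf
        rw [mul_rpow hK.le (exp_pos _).le, mul_rpow hc.le (exp_pos _).le, hexp]
        field_simp
    _ ≤ (∫ x, v x ∂annulusMeasure N ρ Ω φ T) ^ p :=
        rpow_le_rpow (by positivity) (hbound T hT).1 (zero_le_one.trans hp)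
    _ ≤ _ := hv.rpow_integral_annulusMeasure_le hρ hΩ h hp (hmass T)

theorem exists_le_integral_rpow (hρ : 0 < ρ) (hΩ : IsConeDomain N Ω)
    (h : DirichletEigenpair N Ω l φ) (hγ : IsLowerExponent N (l - μ) γ) (hp : 0 ≤ p) :
    ∃ c T₀, 0 < c ∧ ∀ T, T₀ ≤ T →
      c * exp ((N + p * γ) * T) ≤ ∫ x, v x ^ p ∂annulusMeasure N ρ Ω φ T :=
  (le_total p 1).elim (hv.exists_le_integral_rpow_of_le_one hρ hΩ h hγ hp)
    (hv.exists_le_integral_rpow_of_one_le hρ hΩ h hγ)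

end IsPosSupersol

end PowerMeans

section RieszPotential

variable {N : ℕ} {Ω : Set (Euc N)} {φ : Euc N → ℝ} {l μ ρ γ α p q T : ℝ} {v : Euc N → ℝ}
  {x : Euc N}

lemma IsConeDomain.nontrivial (hΩ : IsConeDomain N Ω) : Nontrivial (Euc N) := by
  obtain ⟨ω, hω⟩ := hΩ.2.1.nonempty
  exact nontrivial_of_ne ω 0 (ne_zero_of_mem_unit_sphere ⟨ω, hΩ.1 hω⟩)

lemma ofReal_rpow_neg_mul_integral_le (hv : IsPosSupersol N ρ μ Ω v) (hρ : 0 < ρ)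
    (hΩ : IsConeDomain N Ω) (h : DirichletEigenpair N Ω l φ) (hα : 0 ≤ α) (hp : 0 ≤ p)
    (hx : ‖x‖ ≤ exp (T + 1)) :
    ENNReal.ofReal ((2 * exp (T + 1)) ^ (-α) * ∫ y, v y ^ p ∂annulusMeasure N ρ Ω φ T)
      ≤ ∫⁻ y in logAnnulus N ρ Ω T, ENNReal.ofReal (v y ^ p * ‖x - y‖ ^ (-α)) := by
  have := hΩ.nontrivial
  have hmeas := measurableSet_logAnnulus hρ hΩ T
  have hpos (y) (hy : y ∈ logAnnulus N ρ Ω T) : 0 ≤ v y ^ p * homExt φ y :=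
    mul_nonneg (rpow_nonneg (hv.pos y hy.1).le p)
      (h.homExt_pos (coneGT_subset_cone hρ hy.1)).le
  rw [h.integral_annulusMeasure hρ hΩ, ENNReal.ofReal_mul (by positivity),
    ofReal_integral_eq_lintegral_ofReal ((h.integrable_annulusMeasure_iff hρ hΩ).1
      (hv.integrable_rpow_annulusMeasure hρ hΩ h hp T)) (ae_restrict_of_forall_mem hmeas hpos),
    ← lintegral_const_mul' _ _ ENNReal.ofReal_ne_top]
  refine lintegral_mono_ae ?_
  have hne : ∀ᵐ y ∂(volume.restrict (logAnnulus N ρ Ω T)), y ≠ x := Measure.ae_ne _ x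
  filter_upwards [hne, ae_restrict_mem hmeas] with y hyx hy
  have hvy := rpow_nonneg (hv.pos y hy.1).le p
  have hdist : ‖x - y‖ ≤ 2 * exp (T + 1) := by
    linarith [norm_sub_le x y, norm_le_exp_of_mem_logAnnulus hρ hy]
  have hkernel : (2 * exp (T + 1)) ^ (-α) ≤ ‖x - y‖ ^ (-α) :=
    rpow_le_rpow_of_nonpos (norm_pos_iff.2 (sub_ne_zero.2 hyx.symm)) hdist (neg_nonpos.2 hα)
  rw [← ENNReal.ofReal_mul (by positivity), mul_comm]
  refine ENNReal.ofReal_le_ofReal (mul_le_mul ?_ hkernel (by positivity) hvy)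
  exact mul_le_of_le_one_right hvy (h.homExt_le_one (coneGT_subset_cone hρ hy.1))

lemma rpow_neg_two_mul_exp_add_one (α T : ℝ) :
    (2 * exp (T + 1)) ^ (-α) = (2 * exp 1) ^ (-α) * exp (-α * T) := by
  rw [mul_comm (-α) T, exp_mul, ← mul_rpow (by positivity) (by positivity), mul_assoc, ← exp_add,
    add_comm T]

lemma pairwise_disjoint_logAnnulus_natCast (n : ℕ) :
    Pairwise (Function.onFun Disjoint fun k : ℕ => logAnnulus N ρ Ω (n + k : ℕ)) := by
  refine fun i j hij => Set.disjoint_left.2 fun x hi hj => hij ?_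
  have hij' : n + i < n + j + 1 := by exact_mod_cast hi.2.1.trans_lt hj.2.2
  have hji' : n + j < n + i + 1 := by exact_mod_cast hj.2.1.trans_lt hi.2.2
  omega

-- Each of the infinitely many far logarithmic annuli contributes at least a fixed amount.
theorem IsPosSupersol.rieszConv_rpow_eq_top (hv : IsPosSupersol N ρ μ Ω v) (hρ : 0 < ρ)
    (hΩ : IsConeDomain N Ω) (h : DirichletEigenpair N Ω l φ) (hγ : IsLowerExponent N (l - μ) γ)
    (hα : 0 ≤ α) (hp : 0 ≤ p) (hcrit : p * -γ ≤ N - α) (x : Euc N) :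
    rieszConv N α ρ Ω (fun y => v y ^ p) x = ⊤ := by
  obtain ⟨c, T₀, hc, hlower⟩ := hv.exists_le_integral_rpow hρ hΩ h hγ hp
  obtain ⟨n, hn⟩ := exists_nat_ge (max T₀ ‖x‖)
  set c' := (2 * exp 1) ^ (-α) * c
  have hc' : 0 < c' := by positivity
  have hannulus (k : ℕ) : ENNReal.ofReal c' ≤ ∫⁻ y in logAnnulus N ρ Ω (n + k : ℕ),
      ENNReal.ofReal (v y ^ p * ‖x - y‖ ^ (-α)) := by
    set T : ℝ := ((n + k : ℕ) : ℝ)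
    have hnT : (n : ℝ) ≤ T := Nat.cast_le.2 (Nat.le_add_right n k)
    have hT : max T₀ ‖x‖ ≤ T := hn.trans hnT
    have hx : ‖x‖ ≤ exp (T + 1) := by
      linarith [le_max_right T₀ ‖x‖, add_one_le_exp (T + 1)]
    refine le_trans (ENNReal.ofReal_le_ofReal ?_)
      (ofReal_rpow_neg_mul_integral_le hv hρ hΩ h hα hp hx)
    have hgrowth : 1 ≤ exp (-α * T) * exp ((N + p * γ) * T) := by
      rw [← exp_add, ← add_mul]
      exact one_le_exp (mul_nonneg (by linarith) (Nat.cast_nonneg _))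
    rw [rpow_neg_two_mul_exp_add_one]
    calc c' ≤ c' * (exp (-α * T) * exp ((N + p * γ) * T)) :=
          le_mul_of_one_le_right hc'.le hgrowth
      _ = (2 * exp 1) ^ (-α) * exp (-α * T) * (c * exp ((N + p * γ) * T)) := by ring
      _ ≤ _ := by
          gcongr
          exact hlower T ((le_max_left _ _).trans hT)
  refine top_le_iff.1 ?_
  calc ⊤ = ∑' _ : ℕ, ENNReal.ofReal c' :=
        (ENNReal.tsum_const_eq_top_of_ne_zero (ENNReal.ofReal_pos.2 hc').ne').symm
    _ ≤ _ := ENNReal.tsum_le_tsum hannulus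
    _ = ∫⁻ y in ⋃ k : ℕ, logAnnulus N ρ Ω (n + k : ℕ),
          ENNReal.ofReal (v y ^ p * ‖x - y‖ ^ (-α)) :=
        (lintegral_iUnion (fun _ => measurableSet_logAnnulus hρ hΩ _)
          (pairwise_disjoint_logAnnulus_natCast n) _).symm
    _ ≤ _ := lintegral_mono_set (iUnion_subset fun _ => logAnnulus_subset)

lemma integral_rpow_mul_integral_rpow_le (hv : IsPosSupersol N ρ μ Ω v) (hρ : 0 < ρ)
    (hΩ : IsConeDomain N Ω) (h : DirichletEigenpair N Ω l φ) (hα : 0 ≤ α) (hp : 0 ≤ p)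
    (hq : 0 ≤ q) (hfin : ∀ x ∈ coneGT N ρ Ω, rieszConv N α ρ Ω (fun y => v y ^ p) x < ⊤)
    {g : Euc N → ℝ} (hg : Integrable g (annulusMeasure N ρ Ω φ T))
    (hle : ∀ x ∈ coneGT N ρ Ω,
      (rieszConv N α ρ Ω (fun y => v y ^ p) x).toReal * v x ^ q ≤ g x) :
    (2 * exp 1) ^ (-α) * exp (-α * T) * ((∫ x, v x ^ p ∂annulusMeasure N ρ Ω φ T)
        * ∫ x, v x ^ q ∂annulusMeasure N ρ Ω φ T)
      ≤ ∫ x, g x ∂annulusMeasure N ρ Ω φ T := by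
  rw [← rpow_neg_two_mul_exp_add_one, ← mul_assoc, ← integral_const_mul]
  refine integral_mono_ae ((hv.integrable_rpow_annulusMeasure hρ hΩ h hq T).const_mul _) hg
    (ae_annulusMeasure_of_forall_mem hρ hΩ fun x hx => ?_)
  have hconv := (ofReal_rpow_neg_mul_integral_le hv hρ hΩ h hα hp
    (norm_le_exp_of_mem_logAnnulus hρ hx)).trans (lintegral_mono_set logAnnulus_subset)
  refine (mul_le_mul_of_nonneg_right ?_ (rpow_nonneg (hv.pos x hx.1).le q)).trans (hle x hx.1)
  exact (ENNReal.ofReal_le_iff_le_toReal (hfin x hx.1).ne).1 hconv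

end RieszPotential

section CyclicEstimates

variable {U V W S M P s a b c C C' k K γ α n T : ℝ}

lemma rpow_le_of_cyclic_estimates (hU : 0 ≤ U) (hV : 0 < V) (hM : 0 < M)
    (ha : 0 ≤ a) (hs : 0 ≤ s) (hVW : V ^ P ≤ W * M ^ (P - 2)) (hWU : W ≤ a * U)
    (hUS : U ^ s ≤ S * M ^ (s - 1)) (hSV : S ≤ b * V) :
    V ^ (s * P - 1) ≤ a ^ s * b * M ^ (s * P - s - 1) := by
  have hexp : M ^ (s * P - s - 1) = M ^ (s - 1) * (M ^ (P - 2)) ^ s := by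
    rw [← rpow_mul hM.le, ← rpow_add hM]
    ring_nf
  rw [rpow_sub_one hV.ne', div_le_iff₀ hV, mul_comm s P, rpow_mul hV.le]
  calc (V ^ P) ^ s ≤ (a * U * M ^ (P - 2)) ^ s := by
        gcongr
        exact hVW.trans (by gcongr)
    _ = a ^ s * U ^ s * (M ^ (P - 2)) ^ s := by
        rw [mul_rpow (by positivity) (by positivity), mul_rpow ha hU]
    _ ≤ a ^ s * (b * V * M ^ (s - 1)) * (M ^ (P - 2)) ^ s := by
        gcongr
        exact hUS.trans (by gcongr)
    _ = a ^ s * b * M ^ (P * s - s - 1) * V := by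
        rw [mul_comm P s, hexp]
        ring

lemma exp_le_of_cyclic_estimates (hc : 0 < c) (hC : 0 < C) (hk : 0 < k)
    (hK : 0 < K) (hU : 0 ≤ U) (hs : 1 ≤ s) (hP : 2 ≤ P)
    (hV : c * exp ((n + γ) * T) ≤ V) (hVW : V ^ P ≤ W * (K * exp (T * n)) ^ (P - 2))
    (hWU : k * exp (-α * T) * W ≤ C * exp (-2 * T) * U)
    (hUS : U ^ s ≤ S * (K * exp (T * n)) ^ (s - 1)) (hSV : S ≤ C' * exp (-2 * T) * V) :
    exp (((n + γ) * (s * P - 1) - s * (α - 2) + 2 - n * (s * P - s - 1)) * T)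
      ≤ (C / k) ^ s * C' * K ^ (s * P - s - 1) / c ^ (s * P - 1) := by
  have hWU' : W ≤ C / k * exp ((α - 2) * T) * U := by
    have hexp : exp (-2 * T) = exp ((α - 2) * T) * exp (-α * T) := by
      rw [← exp_add]
      ring_nf
    rw [div_mul_eq_mul_div, div_mul_eq_mul_div, le_div_iff₀ hk]
    refine le_of_mul_le_mul_right ?_ (exp_pos (-α * T))
    rw [hexp] at hWU
    linarith
  have hchain := rpow_le_of_cyclic_estimates hU ((mul_pos hc (exp_pos _)).trans_le hV)
    (by positivity) (by positivity) (zero_le_one.trans hs) hVW hWU' hUS hSV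
  have hlower : (c * exp ((n + γ) * T)) ^ (s * P - 1) ≤ V ^ (s * P - 1) :=
    rpow_le_rpow (by positivity) hV (by nlinarith)
  have hmul_exp {x : ℝ} (hx : 0 < x) (y r : ℝ) : (x * exp y) ^ r = x ^ r * exp (y * r) := by
    rw [mul_rpow hx.le (exp_pos y).le, exp_mul]
  have hboth := hlower.trans hchain
  rw [hmul_exp hc, hmul_exp (by positivity), hmul_exp hK] at hboth
  rw [le_div_iff₀ (by positivity), mul_comm]
  refine le_of_mul_le_mul_right ?_ (exp_pos ((s * (α - 2) - 2 + n * (s * P - s - 1)) * T))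
  calc _ = c ^ (s * P - 1) * exp ((n + γ) * T * (s * P - 1)) := by
        rw [mul_assoc, ← exp_add]
        ring_nf
    _ ≤ _ := hboth
    _ = (C / k) ^ s * C' * K ^ (s * P - s - 1) * (exp ((α - 2) * T * s) * exp (-2 * T)
          * exp (T * n * (s * P - s - 1))) := by ring
    _ = _ := by
        rw [← exp_add, ← exp_add]
        ring_nf

end CyclicEstimates

lemma nonpos_of_forall_exp_mul_le {δ A T₀ : ℝ} (h : ∀ T, T₀ ≤ T → exp (δ * T) ≤ A) : δ ≤ 0 := by
  by_contra! hδ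
  have hlim : Tendsto (fun T => exp (δ * T)) atTop atTop :=
    tendsto_exp_atTop.comp (tendsto_id.const_mul_atTop hδ)
  obtain ⟨T, hT, hA⟩ := ((eventually_ge_atTop T₀).and (hlim.eventually_gt_atTop A)).exists
  exact (h T hT).not_gt hA

section System

variable {N : ℕ} {Ω : Set (Euc N)} {φ : Euc N → ℝ} {l μ ρ γ α p q s : ℝ} {u v : Euc N → ℝ}

lemma isPosSupersol_of_continuousOn_closure {w : Euc N → ℝ}
    (hdiff : ContDiffOn ℝ 2 w (coneGT N ρ Ω)) (hcont : ContinuousOn w (closure (coneGT N ρ Ω)))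
    (hpos : ∀ x ∈ coneGT N ρ Ω, 0 < w x) (hnonneg : ∀ x ∈ coneGT N ρ Ω, 0 ≤ hardyOp μ w x) :
    IsPosSupersol N ρ μ Ω w where
  contDiffOn := hdiff
  pos := hpos
  bddAbove R := (((isCompact_closedBall (0 : Euc N) R).inter_left isClosed_closure).bddAbove_image
    (hcont.mono inter_subset_left)).mono (image_mono (inter_subset_inter_left _ subset_closure))
  hardyOp_nonneg := hnonneg

namespace IsPosSolS

variable (huv : IsPosSolS N ρ μ α p q s Ω u v)
include huv

lemma rieszConv_mul_le (x) (hx : x ∈ coneGT N ρ Ω) :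
    (rieszConv N α ρ Ω (fun y => v y ^ p) x).toReal * v x ^ q ≤ hardyOp μ u x := by
  obtain ⟨-, -, -, -, -, -, -, hu, -⟩ := huv
  exact (hu x hx).trans_eq (hardyOp_eq_lap μ u x).symm

lemma rpow_le_hardyOp (x) (hx : x ∈ coneGT N ρ Ω) : u x ^ s ≤ hardyOp μ v x := by
  obtain ⟨-, -, -, -, -, -, -, -, hv⟩ := huv
  exact (hv x hx).trans_eq (hardyOp_eq_lap μ v x).symm

lemma isPosSupersol_left : IsPosSupersol N ρ μ Ω u := by
  obtain ⟨hdiff, hcont, -, -, hu, hv, -⟩ := id huv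
  exact isPosSupersol_of_continuousOn_closure hdiff hcont hu fun x hx =>
    (mul_nonneg ENNReal.toReal_nonneg (rpow_nonneg (hv x hx).le q)).trans
      (huv.rieszConv_mul_le x hx)

lemma isPosSupersol_right : IsPosSupersol N ρ μ Ω v := by
  obtain ⟨-, -, hdiff, hcont, hu, hv, -⟩ := id huv
  exact isPosSupersol_of_continuousOn_closure hdiff hcont hv fun x hx =>
    (rpow_nonneg (hu x hx).le s).trans (huv.rpow_le_hardyOp x hx)

lemma rieszConv_lt_top (x) (hx : x ∈ coneGT N ρ Ω) :
    rieszConv N α ρ Ω (fun y => v y ^ p) x < ⊤ := by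
  obtain ⟨-, -, -, -, -, -, hfin, -⟩ := huv
  exact hfin x hx

theorem sub_lt_mul_neg (hρ : 0 < ρ) (hΩ : IsConeDomain N Ω) (h : DirichletEigenpair N Ω l φ)
    (hγ : IsLowerExponent N (l - μ) γ) (hα : 0 ≤ α) (hp : 0 ≤ p) : N - α < p * -γ := by
  by_contra! hcrit
  obtain ⟨ω, hω⟩ := hΩ.2.1.nonempty
  have hx : (ρ + 1) • ω ∈ coneGT N ρ Ω :=
    smul_mem_coneGT hρ.le (lt_add_one ρ) hω (mem_sphere_zero_iff_norm.1 (hΩ.1 hω))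
  exact (huv.rieszConv_lt_top _ hx).ne
    (huv.isPosSupersol_right.rieszConv_rpow_eq_top hρ hΩ h hγ hα hp hcrit _)

-- The cycle is `∫ v → ∫ v ^ p * ∫ v ^ q → ∫ u → ∫ u ^ s → ∫ v`.
lemma exists_exp_mul_le (hρ : 0 < ρ) (hΩ : IsConeDomain N Ω) (h : DirichletEigenpair N Ω l φ)
    (hγ : IsLowerExponent N (l - μ) γ) (hα : 0 ≤ α) (hp : 0 < p) (hq : 0 < q) (hs : 1 ≤ s)
    (hpq : 2 ≤ p + q) :
    ∃ A T₀, ∀ T, T₀ ≤ T → exp (((N + γ) * (s * (p + q) - 1) - s * (α - 2) + 2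
      - N * (s * (p + q) - s - 1)) * T) ≤ A := by
  have hu := huv.isPosSupersol_left
  have hv := huv.isPosSupersol_right
  obtain ⟨_, C, T₁, _, hC, hbound_u⟩ := hu.exists_annulus_bounds hρ hΩ h hγ
  obtain ⟨c, C', T₂, hc, _, hbound_v⟩ := hv.exists_annulus_bounds hρ hΩ h hγ
  obtain ⟨K, hK, hmass⟩ := h.exists_measureReal_annulusMeasure_le hρ hΩ
  refine ⟨(C / (2 * exp 1) ^ (-α)) ^ s * C' * K ^ (s * (p + q) - s - 1) / c ^ (s * (p + q) - 1),
    max T₁ T₂, fun T hT => ?_⟩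
  obtain ⟨-, hint_u, hle_u⟩ := hbound_u T ((le_max_left _ _).trans hT)
  obtain ⟨hlower_v, hint_v, hle_v⟩ := hbound_v T ((le_max_right _ _).trans hT)
  have hu_pow := hu.integrable_rpow_annulusMeasure hρ hΩ h (zero_le_one.trans hs) T
  refine exp_le_of_cyclic_estimates hc hC (rpow_pos_of_pos (by positivity) (-α)) hK
    (integral_nonneg_of_ae (hu.ae_nonneg_annulusMeasure hρ hΩ T)) hs hpq hlower_v
    (hv.rpow_add_integral_annulusMeasure_le hρ hΩ h hp hq hpq (hmass T)) ?_
    (hu.rpow_integral_annulusMeasure_le hρ hΩ h hs (hmass T)) ?_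
  · exact (integral_rpow_mul_integral_rpow_le hv hρ hΩ h hα hp.le hq.le huv.rieszConv_lt_top hint_u
      huv.rieszConv_mul_le).trans hle_u
  · exact (integral_mono_ae hu_pow hint_v (ae_annulusMeasure_of_forall_mem hρ hΩ fun x hx =>
      huv.rpow_le_hardyOp x hx.1)).trans hle_v

theorem le_add_mul_neg (hρ : 0 < ρ) (hΩ : IsConeDomain N Ω) (h : DirichletEigenpair N Ω l φ)
    (hγ : IsLowerExponent N (l - μ) γ) (hα : 0 ≤ α) (hp : 0 < p) (hq : 0 < q) (hs : 1 ≤ s)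
    (hpq : 2 ≤ p + q) : (-γ + 2) / s + N - α + 2 ≤ (p + q) * -γ := by
  obtain ⟨A, T₀, hexp⟩ := huv.exists_exp_mul_le hρ hΩ h hγ hα hp hq hs hpq
  have hδ := nonpos_of_forall_exp_mul_le hexp
  have hs₀ : 0 < s := zero_lt_one.trans_le hs
  refine le_of_mul_le_mul_left ?_ hs₀
  have hmul : s * ((-γ + 2) / s + N - α + 2) = -γ + 2 + s * (N - α + 2) := by
    field_simp
    ring
  linarith

end IsPosSolS

end System

theorem system_no_solution_subcritical_general
    (N : ℕ) (hN : 2 ≤ N) (Ω : Set (Euc N)) (hΩ : IsConeDomain N Ω)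
    (lam1 : ℝ) (φ : Euc N → ℝ) (hphi : DirichletEigenpair N Ω lam1 φ)
    (α p q s ρ μ : ℝ) (hα : 0 ≤ α) (hp : 0 < p) (hq : 0 < q) (hρ : 0 < ρ)
    (hμ : μ ≤ CHconst N lam1) (hs : 1 ≤ s) (hpq2 : 2 ≤ p + q)
    (hcrit : p * (-(gammaStar N lam1 μ)) ≤ (N : ℝ) - α ∨
      (p + q) * (-(gammaStar N lam1 μ)) <
        ((-(gammaStar N lam1 μ)) + 2) / s + (N : ℝ) - α + 2) :
    ¬ ∃ u v : Euc N → ℝ, IsPosSolS N ρ μ α p q s Ω u v := by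
  rintro ⟨u, v, huv⟩
  have hγ : IsLowerExponent N (lam1 - μ) (gammaStar N lam1 μ) := isLowerExponent_gammaStar hN hμ
  rcases hcrit with hslow | hsub
  · exact (huv.sub_lt_mul_neg hρ hΩ hphi hγ hα hp.le).not_ge hslow
  · exact (huv.le_add_mul_neg hρ hΩ hphi hγ hα hp hq hs hpq2).not_gt hsub

end Development

/-- if `μ ≤ C_{H,Ω}`, `s > 1`, `p + q ≥ 2` and either `p·|γ_*| ≤ N - α` or
`(p+q)·|γ_*| < (|γ_*|+2)/s + N - α + 2`, then the system `(S)` has no positive solution. -/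
theorem system_no_solution_subcritical
    (N : ℕ) (hN : 2 ≤ N) (Ω : Set (Euc N)) (hΩ : IsConeDomain N Ω)
    (lam1 : ℝ) (φ : Euc N → ℝ) (hphi : DirichletEigenpair N Ω lam1 φ)
    (α p q s ρ μ : ℝ) (hα : 0 ≤ α) (hαN : α < N) (hp : 0 < p) (hq : 0 < q) (hρ : 0 < ρ)
    (hμ : μ ≤ CHconst N lam1) (hs : 1 < s) (hpq2 : 2 ≤ p + q)
    (hcrit : p * (-(gammaStar N lam1 μ)) ≤ (N : ℝ) - α ∨
      (p + q) * (-(gammaStar N lam1 μ)) <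
        ((-(gammaStar N lam1 μ)) + 2) / s + (N : ℝ) - α + 2) :
    ¬ ∃ u v : Euc N → ℝ, IsPosSolS N ρ μ α p q s Ω u v :=
  system_no_solution_subcritical_general N hN Ω hΩ lam1 φ hphi α p q s ρ μ hα hp hq hρ hμ hs.le hpq2
    hcrit
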